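/- arXiv:2507.06142 — 8 statements merged into one kernel-verified Lean document; each statement's English description precedes it below -/
import Mathlib

section
/- Let f : ℝ → ℂ be defined by f(t) = t·e^{i t⁴/4}. Then for every x ∈ ℝ the limit L(x) := lim_{R→+∞} ∫_x^R f(t) dt exists in ℂ, and the function g : ℝ → ℂ defined by g(x) = −L(x) is continuous on ℝ and Lebesgue integrable on ℝ. -/
open Filter MeasureTheory intervalIntegral

/-! On `(0, ∞)` write `t e^{it⁴/4} = t⁻² · d/dt(-i e^{it⁴/4})`, a decreasing null function times the
derivative of a bounded one. Dirichlet's test (an integration by parts) shows that the tail integral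
at `x > 0` converges and has norm at most `2 x⁻²`, which is integrable at `+∞`. The integrand is
odd, so the tail integral is even and the same decay holds at `-∞`. -/

open Set Topology

section TailIntegral

variable {E : Type*} [NormedAddCommGroup E] [NormedSpace ℝ E] {f : ℝ → E}

/-- The improper integral `lim_{R → ∞} ∫_x^R f` as a function of its lower end point. The limit may
be only conditionally convergent; where it does not exist, the value is unspecified. -/
noncomputable def tailIntegral (f : ℝ → E) (x : ℝ) : E :=
  limUnder atTop fun R : ℝ => ∫ t in x..R, f t

section Convergent

variable {a : ℝ} {c : E} (hf : ∀ x y, IntervalIntegrable f volume x y)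
  (hc : Tendsto (fun R : ℝ => ∫ t in a..R, f t) atTop (𝓝 c))

include hf hc

theorem tendsto_integral_of_tendsto_integral (x : ℝ) :
    Tendsto (fun R : ℝ => ∫ t in x..R, f t) atTop (𝓝 (c - ∫ t in a..x, f t)) :=
  (hc.sub_const _).congr fun R => integral_interval_sub_left (hf a R) (hf a x)

theorem tailIntegral_eq_sub (x : ℝ) : tailIntegral f x = c - ∫ t in a..x, f t :=
  (tendsto_integral_of_tendsto_integral hf hc x).limUnder_eq

theorem tendsto_integral_tailIntegral (x : ℝ) :
    Tendsto (fun R : ℝ => ∫ t in x..R, f t) atTop (𝓝 (tailIntegral f x)) := by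
  rw [tailIntegral_eq_sub hf hc]
  exact tendsto_integral_of_tendsto_integral hf hc x

theorem continuous_tailIntegral : Continuous (tailIntegral f) := by
  rw [funext (tailIntegral_eq_sub hf hc)]
  exact continuous_const.sub (continuous_primitive hf a)

end Convergent

theorem integral_neg_self_of_odd (hodd : f.Odd) (x : ℝ) : ∫ t in -x..x, f t = 0 := by
  have reflect : ∫ t in -x..x, f (-t) = ∫ t in -x..x, f t := by
    rw [integral_comp_neg, neg_neg]
  simp only [hodd _, intervalIntegral.integral_neg] at reflect
  have : IsAddTorsionFree E := .of_isTorsionFree ℝ E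
  exact neg_eq_self.mp reflect

theorem tailIntegral_neg_of_odd (hf : ∀ x y, IntervalIntegrable f volume x y) (hodd : f.Odd)
    (x : ℝ) : tailIntegral f (-x) = tailIntegral f x := by
  have same_integrals (R : ℝ) : ∫ t in -x..R, f t = ∫ t in x..R, f t := by
    rw [← integral_add_adjacent_intervals (hf (-x) x) (hf x R),
      integral_neg_self_of_odd hodd, zero_add]
  simp only [tailIntegral, same_integrals]

theorem integrable_tailIntegral_of_odd {a : ℝ} {c : E} {F : Type*} [NormedAddCommGroup F]
    {g : ℝ → F} (hf : ∀ x y, IntervalIntegrable f volume x y) (hodd : f.Odd)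
    (hc : Tendsto (fun R : ℝ => ∫ t in a..R, f t) atTop (𝓝 c))
    (hfg : tailIntegral f =O[atTop] g) (hg : IntegrableAtFilter g atTop) :
    Integrable (tailIntegral f) := by
  refine (continuous_tailIntegral hf hc).locallyIntegrable
    |>.integrable_of_isBigO_atTop_of_norm_isNegInvariant (.of_forall fun x => ?_) hfg hg
  simp only [Function.comp_apply, tailIntegral_neg_of_odd hf hodd]

end TailIntegral

section DirichletTest

variable {E : Type*} [NormedAddCommGroup E] [NormedSpace ℝ E]
  {u u' : ℝ → ℝ} {v v' : ℝ → E} {x C : ℝ} (hu : ∀ t ∈ Ici x, HasDerivAt u (u' t) t)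
  (hu' : ∀ t ∈ Ioi x, u' t ≤ 0) (hu_lim : Tendsto u atTop (𝓝 0)) (hC : ∀ t ∈ Ici x, ‖v t‖ ≤ C)

include hu hu' hu_lim hC

theorem norm_integral_Ioi_deriv_smul_le :
    ‖∫ t in Ioi x, u' t • v t‖ ≤ C * u x := by
  have pointwise (t : ℝ) (ht : t ∈ Ioi x) : ‖u' t • v t‖ ≤ -C * u' t := by
    rw [norm_smul, Real.norm_of_nonpos (hu' t ht)]
    nlinarith [hu' t ht, hC t (Ioi_subset_Ici_self ht)]
  calc ‖∫ t in Ioi x, u' t • v t‖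
      ≤ ∫ t in Ioi x, -C * u' t :=
        norm_integral_le_of_norm_le
          ((integrableOn_Ioi_deriv_of_nonpos' hu hu' hu_lim).const_mul (-C))
          (ae_restrict_of_forall_mem measurableSet_Ioi pointwise)
    _ = C * u x := by
        rw [MeasureTheory.integral_const_mul, integral_Ioi_of_hasDerivAt_of_nonpos' hu hu' hu_lim]
        ring

theorem integrableOn_Ioi_deriv_smul (hv : ContinuousOn v (Ici x)) :
    IntegrableOn (fun t => u' t • v t) (Ioi x) :=
  (integrableOn_Ioi_deriv_of_nonpos' hu hu' hu_lim).smul_bdd C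
    ((hv.mono Ioi_subset_Ici_self).aestronglyMeasurable measurableSet_Ioi)
    (ae_restrict_of_forall_mem measurableSet_Ioi fun t ht => hC t (Ioi_subset_Ici_self ht))

theorem tendsto_integral_smul_deriv [CompleteSpace E]
    (hv : ∀ t ∈ Ici x, HasDerivAt v (v' t) t)
    (hv' : ∀ R ∈ Ici x, IntervalIntegrable v' volume x R) :
    Tendsto (fun R : ℝ => ∫ t in x..R, u t • v' t) atTop
      (𝓝 (-(u x • v x) - ∫ t in Ioi x, u' t • v t)) := by
  have boundary : Tendsto (fun R => u R • v R) atTop (𝓝 0) :=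
    hu_lim.zero_smul_isBoundedUnder_le
      (isBoundedUnder_of_eventually_le ((eventually_ge_atTop x).mono hC))
  have remainder : Tendsto (fun R => ∫ t in x..R, u' t • v t) atTop
      (𝓝 (∫ t in Ioi x, u' t • v t)) :=
    intervalIntegral_tendsto_integral_Ioi x
      (integrableOn_Ioi_deriv_smul hu hu' hu_lim hC (HasDerivAt.continuousOn hv)) tendsto_id
  rw [← zero_sub (u x • v x)]
  refine ((boundary.sub_const (u x • v x)).sub remainder).congr' ?_
  filter_upwards [eventually_ge_atTop x] with R hR
  have subset_Ici : uIcc x R ⊆ Ici x := by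
    rw [uIcc_of_le hR]
    exact Icc_subset_Ici_self
  have u'_integrable : IntervalIntegrable u' volume x R :=
    (intervalIntegrable_iff_integrableOn_Ioc_of_le hR).mpr
      ((integrableOn_Ioi_deriv_of_nonpos' hu hu' hu_lim).mono_set Ioc_subset_Ioi_self)
  exact (integral_smul_deriv_eq_deriv_smul (fun t ht => hu t (subset_Ici ht))
    (fun t ht => hv t (subset_Ici ht)) u'_integrable (hv' R hR)).symm

theorem exists_tendsto_integral_smul_deriv_norm_le [CompleteSpace E]
    (hv : ∀ t ∈ Ici x, HasDerivAt v (v' t) t)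
    (hv' : ∀ R ∈ Ici x, IntervalIntegrable v' volume x R) :
    ∃ l : E, Tendsto (fun R : ℝ => ∫ t in x..R, u t • v' t) atTop (𝓝 l) ∧ ‖l‖ ≤ 2 * C * u x := by
  refine ⟨_, tendsto_integral_smul_deriv hu hu' hu_lim hC hv hv', ?_⟩
  have u_nonneg : 0 ≤ u x := by
    have integral_nonpos : ∫ t in Ioi x, u' t ≤ 0 := setIntegral_nonpos measurableSet_Ioi hu'
    rwa [integral_Ioi_of_hasDerivAt_of_nonpos' hu hu' hu_lim, zero_sub, neg_nonpos]
      at integral_nonpos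
  calc ‖-(u x • v x) - ∫ t in Ioi x, u' t • v t‖
      ≤ ‖u x • v x‖ + ‖∫ t in Ioi x, u' t • v t‖ := by
        simpa only [norm_neg] using norm_sub_le (-(u x • v x)) _
    _ ≤ u x * C + C * u x := by
        rw [norm_smul, Real.norm_of_nonneg u_nonneg]
        gcongr
        · exact hC x self_mem_Ici
        · exact norm_integral_Ioi_deriv_smul_le hu hu' hu_lim hC
    _ = 2 * C * u x := by ring

end DirichletTest

section OscillatingMonomial

/-- The monomial `t ^ m` modulated by the unimodular factor `e^{i t ^ n / n}`. The phase is
normalised so that its derivative is `t ^ (n - 1)`. -/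
noncomputable def oscillatingMonomial (m n : ℕ) (t : ℝ) : ℂ :=
  (t : ℂ) ^ m * Complex.exp (Complex.I * (t : ℂ) ^ n / n)

variable {m n : ℕ}

theorem continuous_oscillatingMonomial (m n : ℕ) : Continuous (oscillatingMonomial m n) := by
  unfold oscillatingMonomial
  fun_prop

theorem norm_oscillatingMonomial (m n : ℕ) (t : ℝ) : ‖oscillatingMonomial m n t‖ = |t| ^ m := by
  have phase : Complex.I * (t : ℂ) ^ n / n = ((t ^ n / n : ℝ) : ℂ) * Complex.I := by
    push_cast
    ring
  rw [oscillatingMonomial, phase, norm_mul, Complex.norm_exp_ofReal_mul_I, mul_one, norm_pow,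
    Complex.norm_real, Real.norm_eq_abs]

theorem odd_oscillatingMonomial (hm : Odd m) (hn : Even n) : (oscillatingMonomial m n).Odd := by
  intro t
  simp only [oscillatingMonomial, Complex.ofReal_neg, hm.neg_pow, hn.neg_pow, neg_mul]

theorem hasDerivAt_neg_I_mul_oscillatingMonomial_zero (hn : n ≠ 0) (t : ℝ) :
    HasDerivAt (fun s => -Complex.I * oscillatingMonomial 0 n s)
      (oscillatingMonomial (n - 1) n t) t := by
  have hn' : (n : ℂ) ≠ 0 := Nat.cast_ne_zero.mpr hn
  have phase : HasDerivAt (fun s : ℝ => Complex.I * (s : ℂ) ^ n / n)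
      (Complex.I * (t : ℂ) ^ (n - 1)) t := by
    refine (((hasDerivAt_id t).ofReal_comp.pow n).const_mul Complex.I).div_const (n : ℂ)
      |>.congr_deriv ?_
    simp only [id, Complex.ofReal_one]
    field_simp
  simp only [oscillatingMonomial, pow_zero, one_mul]
  refine (phase.cexp.const_mul (-Complex.I)).congr_deriv ?_
  linear_combination (-((t : ℂ) ^ (n - 1) * Complex.exp (Complex.I * (t : ℂ) ^ n / n))) *
    Complex.I_mul_I

theorem rpow_smul_oscillatingMonomial (hn : n ≠ 0) {t : ℝ} (ht : 0 < t) :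
    t ^ (m + 1 - n : ℝ) • oscillatingMonomial (n - 1) n t = oscillatingMonomial m n t := by
  have powers : t ^ (m + 1 - n : ℝ) * t ^ (n - 1) = t ^ m := by
    rw [← Real.rpow_natCast t (n - 1), ← Real.rpow_add ht, Nat.cast_pred (Nat.pos_of_ne_zero hn),
      ← Real.rpow_natCast t m]
    ring_nf
  simp only [oscillatingMonomial, Complex.real_smul, ← mul_assoc]
  exact_mod_cast congrArg (fun s : ℝ => (s : ℂ) * _) powers

theorem exists_tendsto_integral_oscillatingMonomial_norm_le (hmn : m + 1 < n) {x : ℝ}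
    (hx : 0 < x) :
    ∃ l : ℂ, Tendsto (fun R : ℝ => ∫ t in x..R, oscillatingMonomial m n t) atTop (𝓝 l) ∧
      ‖l‖ ≤ 2 * x ^ (m + 1 - n : ℝ) := by
  have hn : n ≠ 0 := Nat.ne_zero_of_lt hmn
  have exponent_neg : (m + 1 - n : ℝ) < 0 := by
    rw [sub_neg]
    exact_mod_cast hmn
  have pos_of_mem {t : ℝ} (ht : t ∈ Ici x) : 0 < t := hx.trans_le ht
  obtain ⟨l, hl, hl_le⟩ := exists_tendsto_integral_smul_deriv_norm_le (x := x) (C := 1)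
    (u := fun t => t ^ (m + 1 - n : ℝ))
    (v := fun t => -Complex.I * oscillatingMonomial 0 n t)
    (fun t ht => Real.hasDerivAt_rpow_const (.inl (pos_of_mem ht).ne'))
    (fun t ht => mul_nonpos_of_nonpos_of_nonneg exponent_neg.le
      (Real.rpow_nonneg (hx.trans ht).le _))
    (by simpa only [neg_neg] using tendsto_rpow_neg_atTop (neg_pos.mpr exponent_neg))
    (fun t _ => by simp [norm_oscillatingMonomial])
    (fun t _ => hasDerivAt_neg_I_mul_oscillatingMonomial_zero hn t)
    (fun R _ => (continuous_oscillatingMonomial _ _).intervalIntegrable x R)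
  refine ⟨l, hl.congr' ?_, by simpa only [mul_one] using hl_le⟩
  filter_upwards [eventually_ge_atTop x] with R hR
  refine integral_congr fun t ht => rpow_smul_oscillatingMonomial hn (pos_of_mem ?_)
  rw [uIcc_of_le hR] at ht
  exact ht.1

theorem tailIntegral_oscillatingMonomial_isBigO (hmn : m + 1 < n) :
    tailIntegral (oscillatingMonomial m n) =O[atTop] fun x : ℝ => x ^ (m + 1 - n : ℝ) := by
  refine .of_bound 2 ?_
  filter_upwards [eventually_gt_atTop 0] with x hx
  obtain ⟨l, hl, hl_le⟩ := exists_tendsto_integral_oscillatingMonomial_norm_le hmn hx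
  rwa [tailIntegral, hl.limUnder_eq, Real.norm_of_nonneg (Real.rpow_nonneg hx.le _)]

theorem integrable_tailIntegral_oscillatingMonomial (hm : Odd m) (hn : Even n)
    (hmn : m + 2 < n) : Integrable (tailIntegral (oscillatingMonomial m n)) := by
  have hmn' : m + 1 < n := by lia
  have exponent_lt : (m + 1 - n : ℝ) < -1 := by
    have : (m + 2 : ℝ) < n := mod_cast hmn
    linarith
  obtain ⟨l, hl, -⟩ := exists_tendsto_integral_oscillatingMonomial_norm_le hmn' one_pos
  exact integrable_tailIntegral_of_odd (continuous_oscillatingMonomial m n).intervalIntegrable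
    (odd_oscillatingMonomial hm hn) hl (tailIntegral_oscillatingMonomial_isBigO hmn')
    (integrableAtFilter_rpow_atTop_iff.mpr exponent_lt)

end OscillatingMonomial

/-- For `f(t) = t e^{it⁴/4}`, the improper integral
`L(x) = lim_{R→∞} ∫_x^R f(t) dt` exists for every `x ∈ ℝ`, and `g = -L` is continuous
and Lebesgue integrable on `ℝ`. -/
theorem stmt_11 (f : ℝ → ℂ)
    (hf : ∀ t : ℝ, f t = (t : ℂ) * Complex.exp (Complex.I * (t : ℂ) ^ 4 / 4)) :
    ∃ L : ℝ → ℂ,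
      (∀ x : ℝ, Tendsto (fun R : ℝ => ∫ t in x..R, f t) atTop (nhds (L x))) ∧
      Continuous (fun x => -L x) ∧ Integrable (fun x => -L x) := by
  obtain rfl : f = oscillatingMonomial 1 4 := by
    funext t
    simp only [hf, oscillatingMonomial, pow_one, Nat.cast_ofNat]
  have hint := (continuous_oscillatingMonomial 1 4).intervalIntegrable (μ := volume)
  obtain ⟨l, hl, -⟩ :=
    exists_tendsto_integral_oscillatingMonomial_norm_le (m := 1) (n := 4) (by simp) one_pos
  exact ⟨tailIntegral (oscillatingMonomial 1 4), tendsto_integral_tailIntegral hint hl,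
    (continuous_tailIntegral hint hl).neg,
    (integrable_tailIntegral_oscillatingMonomial odd_one (by decide) (by simp)).neg⟩
end

section
/- Let f : ℝ → ℂ be defined by f(t) = t·e^{i t⁴/4}, and let g : ℝ → ℂ be the function defined by g(x) = −lim_{R→+∞} ∫_x^R f(t) dt (this limit exists for every x, and g is continuous and Lebesgue integrable on ℝ). Then for every ξ ∈ ℝ with ξ ≠ 0, the limit lim_{R→+∞} ∫_{−R}^{R} f(t) e^{−2πiξt} dt exists and equals 2πiξ·𝓕[g](ξ); moreover, the Fourier transform 𝓕[g] is not Lebesgue integrable on ℝ. -/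
open Filter MeasureTheory FourierTransform Real intervalIntegral

/-!
For the limit, integrate by parts: `g' = f`, and `g` vanishes at `±∞` because it is even.

If `𝓕 g` were integrable, Fourier inversion and the duality `∫ ⟪h, g⟫ = ∫ ⟪𝓕 h, 𝓕 g⟫` would give
`‖∫ ⟪h, g⟫‖ ≤ (sup ‖𝓕 h‖) · ∫ ‖𝓕 g‖` for every integrable `h`. Test this against the truncations
`h = f · 1_(1, R]`. Their Fourier transforms are oscillatory integrals with phase
`x⁴ / 4 - 2πξx` and amplitude `x`, which van der Corput's second-derivative test bounds uniformly in
`R` and `ξ`. On the other hand `g x = -i x⁻² e^{ix⁴/4} + O(x⁻⁶)`, so that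
`∫ ⟪h, g⟫ = -i log R + O(1)`, which is unbounded.
-/

open Set Complex
open scoped Topology InnerProductSpace

section MeanValue

variable {v v' : ℝ → ℝ} {a b : ℝ}

lemma intervalIntegrable_of_hasDerivAt_of_nonneg (hab : a ≤ b)
    (hv : ∀ x ∈ Icc a b, HasDerivAt v (v' x) x) (hv' : ∀ x ∈ Icc a b, 0 ≤ v' x) :
    IntervalIntegrable v' volume a b := by
  refine intervalIntegrable_deriv_of_nonneg (g := v) ?_ ?_ ?_
  · rw [uIcc_of_le hab]
    exact fun x hx ↦ (hv x hx).continuousAt.continuousWithinAt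
  · rw [min_eq_left hab, max_eq_right hab]
    exact fun x hx ↦ hv x (Ioo_subset_Icc_self hx)
  · rw [min_eq_left hab, max_eq_right hab]
    exact fun x hx ↦ hv' x (Ioo_subset_Icc_self hx)

variable {E : Type*} [NormedAddCommGroup E] [NormedSpace ℝ E] {F F' : ℝ → E}

lemma norm_integral_le_sub_of_norm_le_deriv (hab : a ≤ b)
    (hv : ∀ x ∈ Icc a b, HasDerivAt v (v' x) x) (hle : ∀ x ∈ Icc a b, ‖F x‖ ≤ v' x) :
    ‖∫ x in a..b, F x‖ ≤ v b - v a := by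
  have hv'_int := intervalIntegrable_of_hasDerivAt_of_nonneg hab hv fun x hx ↦
    (norm_nonneg _).trans (hle x hx)
  calc ‖∫ x in a..b, F x‖ ≤ ∫ x in a..b, v' x :=
        intervalIntegral.norm_integral_le_of_norm_le hab
          (.of_forall fun x hx ↦ hle x (Ioc_subset_Icc_self hx)) hv'_int
    _ = v b - v a := integral_eq_sub_of_hasDerivAt (by rwa [uIcc_of_le hab]) hv'_int

lemma norm_integral_le_add_add {p q : ℝ} (hap : a ≤ p) (hpq : p ≤ q) (hqb : q ≤ b)
    (hF : IntervalIntegrable F volume a b) :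
    ‖∫ x in a..b, F x‖ ≤ ‖∫ x in a..p, F x‖ + ‖∫ x in p..q, F x‖ + ‖∫ x in q..b, F x‖ := by
  have hint : ∀ {y z}, a ≤ y → y ≤ z → z ≤ b → IntervalIntegrable F volume y z :=
    fun hay hyz hzb ↦ hF.mono_set <| by
      rw [uIcc_of_le hyz, uIcc_of_le (hay.trans (hyz.trans hzb))]
      exact Icc_subset_Icc hay hzb
  have hap_int := hint le_rfl hap (hpq.trans hqb)
  have hpq_int := hint hap hpq hqb
  have hqb_int := hint (hap.trans hpq) hqb le_rfl
  rw [← integral_add_adjacent_intervals (hap_int.trans hpq_int) hqb_int,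
    ← integral_add_adjacent_intervals hap_int hpq_int]
  exact norm_add₃_le

variable [CompleteSpace E]

lemma intervalIntegrable_of_hasDerivAt_of_norm_le_deriv (hab : a ≤ b)
    (hF : ∀ x ∈ Icc a b, HasDerivAt F (F' x) x) (hv : ∀ x ∈ Icc a b, HasDerivAt v (v' x) x)
    (hle : ∀ x ∈ Icc a b, ‖F' x‖ ≤ v' x) : IntervalIntegrable F' volume a b := by
  have hIoc : ∀ᵐ x ∂volume.restrict (uIoc a b), x ∈ Icc a b := by
    rw [uIoc_of_le hab]
    exact (ae_restrict_mem measurableSet_Ioc).mono fun x hx ↦ Ioc_subset_Icc_self hx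
  have hv'_int := intervalIntegrable_of_hasDerivAt_of_nonneg hab hv fun x hx ↦
    (norm_nonneg _).trans (hle x hx)
  refine hv'_int.mono_fun ?_ ?_
  · refine (aestronglyMeasurable_deriv F _).congr ?_
    filter_upwards [hIoc] with x hx using (hF x hx).deriv
  · filter_upwards [hIoc] with x hx using (hle x hx).trans (le_abs_self _)

lemma norm_sub_le_sub_of_norm_deriv_le (hab : a ≤ b)
    (hF : ∀ x ∈ Icc a b, HasDerivAt F (F' x) x) (hv : ∀ x ∈ Icc a b, HasDerivAt v (v' x) x)
    (hle : ∀ x ∈ Icc a b, ‖F' x‖ ≤ v' x) : ‖F b - F a‖ ≤ v b - v a := by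
  rw [← integral_eq_sub_of_hasDerivAt (by rwa [uIcc_of_le hab])
    (intervalIntegrable_of_hasDerivAt_of_norm_le_deriv hab hF hv hle)]
  exact norm_integral_le_sub_of_norm_le_deriv hab hv hle

lemma norm_le_neg_of_norm_deriv_le_of_tendsto_zero
    (hF : ∀ x ∈ Ici a, HasDerivAt F (F' x) x) (hv : ∀ x ∈ Ici a, HasDerivAt v (v' x) x)
    (hle : ∀ x ∈ Ici a, ‖F' x‖ ≤ v' x) (hF_lim : Tendsto F atTop (𝓝 0))
    (hv_lim : Tendsto v atTop (𝓝 0)) : ‖F a‖ ≤ -v a := by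
  have hlim : Tendsto (fun b ↦ ‖F b - F a‖) atTop (𝓝 ‖F a‖) := by
    simpa using (hF_lim.sub_const (F a)).norm
  refine le_of_tendsto_of_tendsto hlim (by simpa using hv_lim.sub_const (v a)) ?_
  filter_upwards [eventually_ge_atTop a] with b hab
  exact norm_sub_le_sub_of_norm_deriv_le hab (fun x hx ↦ hF x hx.1) (fun x hx ↦ hv x hx.1)
    fun x hx ↦ hle x hx.1

end MeanValue

lemma hasDerivAt_const_div_pow {𝕜 : Type*} [NontriviallyNormedField 𝕜] (c : 𝕜) (n : ℕ) {x : 𝕜}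
    (hx : x ≠ 0) : HasDerivAt (fun t ↦ c / t ^ n) (-(n * c) / x ^ (n + 1)) x := by
  cases n with
  | zero => simpa using hasDerivAt_const x c
  | succ n =>
    refine ((hasDerivAt_const x c).div (hasDerivAt_pow (n + 1) x)
      (pow_ne_zero _ hx)).congr_deriv ?_
    simp only [add_tsub_cancel_right]
    field_simp
    ring

section VanDerCorput

variable {φ φ' w w' v v' ψ r r' : ℝ → ℝ} {a b : ℝ}

lemma hasDerivAt_cexp_ofReal_mul_I {φ'x x : ℝ} (hφ : HasDerivAt φ φ'x x) :
    HasDerivAt (fun t ↦ cexp (φ t * I)) (cexp (φ x * I) * (φ'x * I)) x :=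
  (hφ.ofReal_comp.mul_const I).cexp

lemma norm_ofReal_mul_cexp_ofReal_mul_I (x y : ℝ) : ‖(x : ℂ) * cexp (y * I)‖ = |x| := by
  rw [norm_mul, norm_exp_ofReal_mul_I, mul_one, norm_real, Real.norm_eq_abs]

lemma norm_integral_mul_deriv_mul_cexp_le (hab : a ≤ b)
    (hφ : ∀ x ∈ Icc a b, HasDerivAt φ (φ' x) x) (hφ' : IntervalIntegrable φ' volume a b)
    (hw : ∀ x ∈ Icc a b, HasDerivAt w (w' x) x) (hv : ∀ x ∈ Icc a b, HasDerivAt v (v' x) x)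
    (hle : ∀ x ∈ Icc a b, |w' x| ≤ v' x) (hψ : ∀ x ∈ Icc a b, w x * φ' x = ψ x) :
    ‖∫ x in a..b, (ψ x : ℂ) * cexp (φ x * I)‖ ≤ |w a| + |w b| + (v b - v a) := by
  rw [← uIcc_of_le hab] at hφ hw hψ
  have hφ'_ofReal : IntervalIntegrable (fun x ↦ (φ' x : ℂ)) volume a b :=
    ⟨hφ'.1.ofReal, hφ'.2.ofReal⟩
  have hexp_int : IntervalIntegrable (fun x ↦ cexp (φ x * I) * (φ' x * I)) volume a b := by
    refine IntervalIntegrable.continuousOn_mul (hφ'_ofReal.mul_const I) fun x hx ↦ ?_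
    exact (hasDerivAt_cexp_ofReal_mul_I (hφ x hx)).continuousAt.continuousWithinAt
  have hw'_int : IntervalIntegrable w' volume a b :=
    intervalIntegrable_of_hasDerivAt_of_norm_le_deriv hab (by rwa [← uIcc_of_le hab]) hv hle
  have hparts := intervalIntegral.integral_mul_deriv_eq_deriv_mul
    (fun x hx ↦ (hw x hx).ofReal_comp) (fun x hx ↦ hasDerivAt_cexp_ofReal_mul_I (hφ x hx))
    ⟨hw'_int.1.ofReal, hw'_int.2.ofReal⟩ hexp_int
  have hremainder : ‖∫ x in a..b, (w' x : ℂ) * cexp (φ x * I)‖ ≤ v b - v a :=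
    norm_integral_le_sub_of_norm_le_deriv hab hv fun x hx ↦ by
      rw [norm_ofReal_mul_cexp_ofReal_mul_I]
      exact hle x hx
  calc ‖∫ x in a..b, (ψ x : ℂ) * cexp (φ x * I)‖
      = ‖∫ x in a..b, (w x : ℂ) * (cexp (φ x * I) * (φ' x * I))‖ := by
        rw [← mul_one ‖_‖, ← norm_I, ← norm_mul, ← intervalIntegral.integral_mul_const]
        congr 1
        refine integral_congr fun x hx ↦ ?_
        simp only [← hψ x hx, ofReal_mul]
        ring
    _ ≤ ‖(w b : ℂ) * cexp (φ b * I)‖ + ‖(w a : ℂ) * cexp (φ a * I)‖ +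
          (v b - v a) := by
        rw [hparts]
        exact (norm_sub_le _ _).trans (add_le_add (norm_sub_le _ _) hremainder)
    _ = |w a| + |w b| + (v b - v a) := by
        rw [norm_ofReal_mul_cexp_ofReal_mul_I, norm_ofReal_mul_cexp_ofReal_mul_I, add_comm |w b|]

lemma norm_integral_mul_cexp_le_of_le_abs {δ : ℝ} (hδ : 0 < δ) (hab : a ≤ b)
    (hφ : ∀ x ∈ Icc a b, HasDerivAt φ (r x * ψ x) x) (hr : ∀ x ∈ Icc a b, HasDerivAt r (r' x) x)
    (hψ : IntervalIntegrable ψ volume a b) (hr' : ∀ x ∈ Icc a b, 0 ≤ r' x)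
    (hδr : ∀ x ∈ Icc a b, δ ≤ |r x|) :
    ‖∫ x in a..b, (ψ x : ℂ) * cexp (φ x * I)‖ ≤ 4 / δ := by
  have hr0 : ∀ x ∈ Icc a b, r x ≠ 0 := fun x hx ↦ abs_pos.mp (hδ.trans_le (hδr x hx))
  have hinv : ∀ x ∈ Icc a b, |(r x)⁻¹| ≤ δ⁻¹ := fun x hx ↦ by
    rw [abs_inv]
    exact inv_anti₀ hδ (hδr x hx)
  have hw : ∀ x ∈ Icc a b, HasDerivAt (fun t ↦ (r t)⁻¹) (-r' x / r x ^ 2) x :=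
    fun x hx ↦ (hr x hx).inv (hr0 x hx)
  have hw' : ∀ x ∈ Icc a b, -r' x / r x ^ 2 ≤ 0 := fun x hx ↦
    div_nonpos_of_nonpos_of_nonneg (neg_nonpos.mpr (hr' x hx)) (sq_nonneg _)
  have hphase : IntervalIntegrable (fun x ↦ r x * ψ x) volume a b := by
    refine hψ.continuousOn_mul ?_
    rw [uIcc_of_le hab]
    exact fun x hx ↦ (hr x hx).continuousAt.continuousWithinAt
  have hparts := norm_integral_mul_deriv_mul_cexp_le hab hφ hphase hw (fun x hx ↦ (hw x hx).fun_neg)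
    (fun x hx ↦ (abs_of_nonpos (hw' x hx)).le) fun x hx ↦ inv_mul_cancel_left₀ (hr0 x hx) (ψ x)
  have ha := hinv a (left_mem_Icc.mpr hab)
  have hb := hinv b (right_mem_Icc.mpr hab)
  rw [div_eq_mul_inv]
  linarith [le_abs_self (r a)⁻¹, neg_abs_le (r b)⁻¹]

lemma exists_mem_Icc_monotoneOn_threshold (hab : a ≤ b) (hr : MonotoneOn r (Icc a b))
    (hrc : ContinuousOn r (Icc a b)) (c : ℝ) :
    ∃ p ∈ Icc a b, (p = a ∨ ∀ x ∈ Icc a p, r x ≤ c) ∧ (p = b ∨ ∀ x ∈ Icc p b, c ≤ r x) := by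
  have ha := left_mem_Icc.mpr hab
  have hb := right_mem_Icc.mpr hab
  rcases le_total c (r a) with hca | hca
  · exact ⟨a, ha, .inl rfl, .inr fun x hx ↦ hca.trans (hr ha hx hx.1)⟩
  rcases le_total (r b) c with hbc | hbc
  · exact ⟨b, hb, .inr fun x hx ↦ (hr hx hb hx.2).trans hbc, .inl rfl⟩
  obtain ⟨p, hp, rfl⟩ := intermediate_value_Icc hab hrc ⟨hca, hbc⟩
  exact ⟨p, hp, .inr fun x hx ↦ hr ⟨hx.1, hx.2.trans hp.2⟩ hp hx.2,
    .inr fun x hx ↦ hr hp ⟨hp.1.trans hx.1, hx.2⟩ hx.1⟩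

lemma exists_monotoneOn_band_split {c d : ℝ} (hab : a ≤ b) (hr : MonotoneOn r (Icc a b))
    (hrc : ContinuousOn r (Icc a b)) :
    ∃ p q, a ≤ p ∧ p ≤ q ∧ q ≤ b ∧ (p = a ∨ ∀ x ∈ Icc a p, r x ≤ c) ∧
      (p = q ∨ c ≤ r p ∧ r q ≤ d) ∧ (q = b ∨ ∀ x ∈ Icc q b, d ≤ r x) := by
  obtain ⟨p, ⟨hap, hpb⟩, hleft, hp⟩ := exists_mem_Icc_monotoneOn_threshold hab hr hrc c
  have hsub : Icc p b ⊆ Icc a b := Icc_subset_Icc_left hap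
  obtain ⟨q, ⟨hpq, hqb⟩, hq, hright⟩ :=
    exists_mem_Icc_monotoneOn_threshold hpb (hr.mono hsub) (hrc.mono hsub) d
  refine ⟨p, q, hap, hpq, hqb, hleft, ?_, hright⟩
  rcases hq with rfl | hq
  · exact .inl rfl
  rcases hp with rfl | hp
  · exact .inl (le_antisymm hpq hqb)
  · exact .inr ⟨hp p (left_mem_Icc.mpr hpb), hq q (right_mem_Icc.mpr hpq)⟩

lemma norm_integral_mul_cexp_le_sub_div {c : ℝ} (hc : 0 < c) (hab : a ≤ b)
    (hψ : ∀ x ∈ Icc a b, 0 ≤ ψ x) (hr : ∀ x ∈ Icc a b, HasDerivAt r (r' x) x)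
    (hle : ∀ x ∈ Icc a b, c * ψ x ≤ r' x) :
    ‖∫ x in a..b, (ψ x : ℂ) * cexp (φ x * I)‖ ≤ (r b - r a) / c := by
  rw [sub_div]
  refine norm_integral_le_sub_of_norm_le_deriv hab (fun x hx ↦ (hr x hx).div_const c)
    fun x hx ↦ ?_
  rw [norm_ofReal_mul_cexp_ofReal_mul_I, abs_of_nonneg (hψ x hx), le_div_iff₀' hc]
  exact hle x hx

/-- Van der Corput's second-derivative test with amplitude `ψ`: in the variable `u = ∫ ψ` the phase
has derivative `r`, and the last hypothesis says that its second derivative is at least `c`. -/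
lemma norm_integral_mul_cexp_le_of_mul_le_deriv {c : ℝ} (hc : 0 < c) (hab : a ≤ b)
    (hψc : ContinuousOn ψ (Icc a b)) (hψ : ∀ x ∈ Icc a b, 0 ≤ ψ x)
    (hφ : ∀ x ∈ Icc a b, HasDerivAt φ (r x * ψ x) x) (hr : ∀ x ∈ Icc a b, HasDerivAt r (r' x) x)
    (hle : ∀ x ∈ Icc a b, c * ψ x ≤ r' x) :
    ‖∫ x in a..b, (ψ x : ℂ) * cexp (φ x * I)‖ ≤ 8 / √c := by
  have hr' : ∀ x ∈ Icc a b, 0 ≤ r' x := fun x hx ↦ (mul_nonneg hc.le (hψ x hx)).trans (hle x hx)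
  have hrc : ContinuousOn r (Icc a b) := HasDerivAt.continuousOn hr
  have hφc : ContinuousOn φ (Icc a b) := HasDerivAt.continuousOn hφ
  have hrmono : MonotoneOn r (Icc a b) :=
    monotoneOn_of_hasDerivWithinAt_nonneg (convex_Icc a b) hrc
      (fun x hx ↦ (hr x (interior_subset hx)).hasDerivWithinAt)
      fun x hx ↦ hr' x (interior_subset hx)
  set δ : ℝ := 2 * √c with hδ_def
  have hδ : 0 < δ := by positivity
  obtain ⟨p, q, hap, hpq, hqb, hleft, hmid, hright⟩ :=
    exists_monotoneOn_band_split (c := -δ) (d := δ) hab hrmono hrc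
  have hfar : ∀ {y z}, y ≤ z → Icc y z ⊆ Icc a b → (z = y ∨ ∀ x ∈ Icc y z, δ ≤ |r x|) →
      ‖∫ x in y..z, (ψ x : ℂ) * cexp (φ x * I)‖ ≤ 4 / δ := by
    rintro y z hyz hsub (rfl | hδr)
    · simpa only [integral_same, norm_zero] using by positivity
    · exact norm_integral_mul_cexp_le_of_le_abs hδ hyz (fun x hx ↦ hφ x (hsub hx))
        (fun x hx ↦ hr x (hsub hx)) ((hψc.mono hsub).intervalIntegrable_of_Icc hyz)
        (fun x hx ↦ hr' x (hsub hx)) hδr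
  have hleft_le := hfar hap (Icc_subset_Icc_right (hpq.trans hqb)) <|
    hleft.imp_right fun h x hx ↦ le_abs.mpr (.inr (le_neg_of_le_neg (h x hx)))
  have hright_le := hfar hqb (Icc_subset_Icc_left (hap.trans hpq)) <|
    hright.imp Eq.symm fun h x hx ↦ le_abs.mpr (.inl (h x hx))
  have hmid_le : ‖∫ x in p..q, (ψ x : ℂ) * cexp (φ x * I)‖ ≤ 2 * δ / c := by
    have hsub : Icc p q ⊆ Icc a b := Icc_subset_Icc hap hqb
    refine (norm_integral_mul_cexp_le_sub_div hc hpq (fun x hx ↦ hψ x (hsub hx))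
      (fun x hx ↦ hr x (hsub hx)) fun x hx ↦ hle x (hsub hx)).trans ?_
    gcongr
    rcases hmid with rfl | ⟨hp, hq⟩ <;> linarith
  have hconst : 4 / δ + 2 * δ / c + 4 / δ = 8 / √c := by
    rw [hδ_def]
    field_simp
    rw [Real.sq_sqrt hc.le]
    ring
  have hsplit := norm_integral_le_add_add hap hpq hqb
    (ContinuousOn.intervalIntegrable_of_Icc hab
      (by fun_prop : ContinuousOn (fun x ↦ (ψ x : ℂ) * cexp (φ x * I)) (Icc a b)))
  linarith

end VanDerCorput

section QuarticPhase

lemma hasDerivAt_quartic_add_linear (θ x : ℝ) :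
    HasDerivAt (fun t : ℝ ↦ t ^ 4 / 4 + θ * t) (x ^ 3 + θ) x := by
  refine (((hasDerivAt_pow 4 x).div_const 4).fun_add
    ((hasDerivAt_id' x).const_mul θ)).congr_deriv ?_
  norm_num

lemma hasDerivAt_div_cube_add {θ x : ℝ} (h : x ^ 3 + θ ≠ 0) :
    HasDerivAt (fun t : ℝ ↦ t / (t ^ 3 + θ)) ((θ - 2 * x ^ 3) / (x ^ 3 + θ) ^ 2) x :=
  ((hasDerivAt_id' x).fun_div ((hasDerivAt_pow 3 x).add_const θ) h).congr_deriv
    (by push_cast; ring)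

lemma abs_deriv_div_cube_add_le {θ x : ℝ} (hθ : 0 ≤ θ) (hx : 0 < x) :
    |(θ - 2 * x ^ 3) / (x ^ 3 + θ) ^ 2| ≤ 2 / x ^ 3 := by
  have hx3 : 0 < x ^ 3 := pow_pos hx 3
  have hnum : |θ - 2 * x ^ 3| ≤ 2 * (x ^ 3 + θ) := abs_le.mpr ⟨by linarith, by linarith⟩
  calc |(θ - 2 * x ^ 3) / (x ^ 3 + θ) ^ 2| = |θ - 2 * x ^ 3| / (x ^ 3 + θ) ^ 2 := by
        rw [abs_div, abs_of_nonneg (sq_nonneg (x ^ 3 + θ))]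
    _ ≤ 2 * (x ^ 3 + θ) / (x ^ 3 + θ) ^ 2 := by gcongr
    _ = 2 / (x ^ 3 + θ) := by field_simp
    _ ≤ 2 / x ^ 3 := by gcongr; linarith

lemma norm_integral_mul_cexp_quartic_le_of_nonneg {θ R : ℝ} (hθ : 0 ≤ θ) (hR : 1 ≤ R) :
    ‖∫ x in (1 : ℝ)..R, (x : ℂ) * cexp ((x ^ 4 / 4 + θ * x : ℝ) * I)‖ ≤ 3 := by
  have hpos : ∀ x ∈ Icc 1 R, 0 < x := fun x hx ↦ zero_lt_one.trans_le hx.1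
  have hφ' : ∀ x ∈ Icc 1 R, 0 < x ^ 3 + θ := fun x hx ↦ by have := hpos x hx; positivity
  have hw_le : ∀ x ∈ Icc 1 R, |x / (x ^ 3 + θ)| ≤ 1 := fun x hx ↦ by
    rw [abs_of_pos (div_pos (hpos x hx) (hφ' x hx)), div_le_one (hφ' x hx)]
    linarith [le_self_pow₀ hx.1 three_ne_zero]
  have hparts := norm_integral_mul_deriv_mul_cexp_le hR
    (fun x _ ↦ hasDerivAt_quartic_add_linear θ x)
    ((by fun_prop : Continuous fun x : ℝ ↦ x ^ 3 + θ).intervalIntegrable _ _)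
    (fun x hx ↦ hasDerivAt_div_cube_add (hφ' x hx).ne')
    (fun x hx ↦ (hasDerivAt_const_div_pow (-1 : ℝ) 2 (hpos x hx).ne').congr_deriv (by norm_num))
    (fun x hx ↦ abs_deriv_div_cube_add_le hθ (hpos x hx))
    fun x hx ↦ div_mul_cancel₀ x (hφ' x hx).ne'
  have h1 := hw_le 1 (left_mem_Icc.mpr hR)
  have hR' := hw_le R (right_mem_Icc.mpr hR)
  have hvR : -1 / R ^ 2 ≤ 0 := by rw [neg_div]; exact neg_nonpos.mpr (by positivity)
  linarith

lemma norm_integral_mul_cexp_quartic_le_of_nonpos {θ R : ℝ} (hθ : θ ≤ 0) (hR : 1 ≤ R) :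
    ‖∫ x in (1 : ℝ)..R, (x : ℂ) * cexp ((x ^ 4 / 4 + θ * x : ℝ) * I)‖ ≤ 8 := by
  have hpos : ∀ x ∈ Icc 1 R, 0 < x := fun x hx ↦ zero_lt_one.trans_le hx.1
  have hφ : ∀ x ∈ Icc 1 R,
      HasDerivAt (fun t : ℝ ↦ t ^ 4 / 4 + θ * t) ((x ^ 2 + θ / x) * x) x := fun x hx ↦
    (hasDerivAt_quartic_add_linear θ x).congr_deriv (by field_simp [(hpos x hx).ne'])
  have hr : ∀ x ∈ Icc 1 R, HasDerivAt (fun t : ℝ ↦ t ^ 2 + θ / t) (2 * x - θ / x ^ 2) x :=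
    fun x hx ↦ by
      have hdiv := hasDerivAt_const_div_pow θ 1 (hpos x hx).ne'
      simp only [pow_one] at hdiv
      exact ((hasDerivAt_pow 2 x).fun_add hdiv).congr_deriv (by push_cast; ring)
  have hle : ∀ x ∈ Icc 1 R, 1 * x ≤ 2 * x - θ / x ^ 2 := fun x hx ↦ by
    linarith [hpos x hx, div_nonpos_of_nonpos_of_nonneg hθ (sq_nonneg x)]
  simpa only [Real.sqrt_one, div_one, id_eq] using
    norm_integral_mul_cexp_le_of_mul_le_deriv one_pos hR continuousOn_id
      (fun x hx ↦ (hpos x hx).le) hφ hr hle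

lemma norm_integral_mul_cexp_quartic_le (θ : ℝ) {R : ℝ} (hR : 1 ≤ R) :
    ‖∫ x in (1 : ℝ)..R, (x : ℂ) * cexp ((x ^ 4 / 4 + θ * x : ℝ) * I)‖ ≤ 8 := by
  rcases le_total 0 θ with hθ | hθ
  · exact (norm_integral_mul_cexp_quartic_le_of_nonneg hθ hR).trans (by norm_num)
  · exact norm_integral_mul_cexp_quartic_le_of_nonpos hθ hR

end QuarticPhase

section TailPrimitive

variable {E : Type*} [NormedAddCommGroup E] [NormedSpace ℝ E] {f g : ℝ → E}

/-- `g` is the primitive of `f` that vanishes at `+∞`, that is `g x = -∫ t in x..∞, f t` with the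
integral understood as a conditionally convergent one. -/
def IsTailPrimitive (f g : ℝ → E) : Prop :=
  ∀ x, Tendsto (fun R ↦ ∫ t in x..R, f t) atTop (𝓝 (-g x))

namespace IsTailPrimitive

lemma eq_add_integral (h : IsTailPrimitive f g) (hf : ∀ a b, IntervalIntegrable f volume a b)
    (a b : ℝ) : g b = g a + ∫ t in a..b, f t := by
  have hlim : Tendsto (fun R ↦ (∫ t in a..b, f t) + ∫ t in b..R, f t) atTop (𝓝 (-g a)) := by
    simpa only [integral_add_adjacent_intervals (hf _ _) (hf _ _)] using h a
  have huniq := tendsto_nhds_unique hlim ((h b).const_add _)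
  rw [← sub_eq_add_neg, neg_eq_iff_add_eq_zero] at huniq
  rw [← sub_eq_zero, ← neg_eq_zero, ← huniq]
  abel

lemma tendsto_atTop_zero (h : IsTailPrimitive f g) (hf : ∀ a b, IntervalIntegrable f volume a b) :
    Tendsto g atTop (𝓝 0) := by
  rw [← add_neg_cancel (g 0)]
  exact ((h 0).const_add (g 0)).congr fun R ↦ (h.eq_add_integral hf 0 R).symm

lemma hasDerivAt [CompleteSpace E] (h : IsTailPrimitive f g) (hf : Continuous f) (x : ℝ) :
    HasDerivAt g (f x) x := by
  rw [funext (h.eq_add_integral hf.intervalIntegrable 0)]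
  exact (hf.integral_hasStrictDerivAt 0 x).hasDerivAt.const_add _

lemma even (h : IsTailPrimitive f g) (hf : ∀ a b, IntervalIntegrable f volume a b)
    (hodd : f.Odd) : g.Even := by
  intro x
  have hneg : ∫ t in (0 : ℝ)..-x, f t = ∫ t in (0 : ℝ)..x, f t := by
    have hreflect := intervalIntegral.integral_comp_neg f (a := x) (b := 0)
    simp only [hodd _, intervalIntegral.integral_neg, neg_zero] at hreflect
    rw [← hreflect, integral_symm x 0]
  rw [h.eq_add_integral hf 0, hneg, ← h.eq_add_integral hf 0]

end IsTailPrimitive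

end TailPrimitive

section Fourier

variable {E : Type*} [NormedAddCommGroup E] [NormedSpace ℂ E] {f g : ℝ → E}

lemma integral_cexp_smul_deriv [CompleteSpace E] {a b : ℝ}
    (hderiv : ∀ x ∈ uIcc a b, HasDerivAt g (f x) x) (hf : IntervalIntegrable f volume a b)
    (ξ : ℝ) :
    ∫ t in a..b, cexp (↑(-2 * π * t * ξ) * I) • f t =
      cexp (↑(-2 * π * b * ξ) * I) • g b - cexp (↑(-2 * π * a * ξ) * I) • g a +
        (2 * π * I * ξ) • ∫ t in a..b, cexp (↑(-2 * π * t * ξ) * I) • g t := by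
  have hexp : ∀ t : ℝ, HasDerivAt (fun t : ℝ ↦ cexp (↑(-2 * π * t * ξ) * I))
      (cexp (↑(-2 * π * t * ξ) * I) * (↑(-2 * π * ξ) * I)) t := fun t ↦ by
    refine hasDerivAt_cexp_ofReal_mul_I ?_
    simpa only [mul_one] using ((hasDerivAt_id' t).const_mul (-2 * π)).mul_const ξ
  rw [integral_smul_deriv_eq_deriv_smul (fun t _ ↦ hexp t) hderiv
    ((by fun_prop : Continuous _).intervalIntegrable _ _) hf, sub_eq_add_neg _ (∫ t in a..b, _),
    ← intervalIntegral.integral_neg, ← intervalIntegral.integral_smul]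
  congr! 3
  rw [smul_smul, ← neg_smul]
  congr 1
  push_cast
  ring

lemma tendsto_integral_cexp_smul_deriv [CompleteSpace E] (hderiv : ∀ x, HasDerivAt g (f x) x)
    (hf : ∀ a b, IntervalIntegrable f volume a b) (hg : Integrable g)
    (hbot : Tendsto g atBot (𝓝 0)) (htop : Tendsto g atTop (𝓝 0)) (ξ : ℝ) :
    Tendsto (fun R : ℝ ↦ ∫ t in (-R)..R, cexp (↑(-2 * π * t * ξ) * I) • f t) atTop
      (𝓝 ((2 * π * I * ξ) • 𝓕 g ξ)) := by
  have hboundary : ∀ {l : Filter ℝ}, Tendsto g l (𝓝 0) →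
      Tendsto (fun t : ℝ ↦ cexp (↑(-2 * π * t * ξ) * I) • g t) l (𝓝 0) := fun hl ↦ by
    rw [tendsto_zero_iff_norm_tendsto_zero] at hl ⊢
    simpa only [norm_smul, norm_exp_ofReal_mul_I, one_mul] using hl
  have hexp_int : Integrable fun t : ℝ ↦ cexp (↑(-2 * π * t * ξ) * I) • g t :=
    hg.bdd_smul 1 (by fun_prop : Continuous _).aestronglyMeasurable
      (.of_forall fun t ↦ (norm_exp_ofReal_mul_I _).le)
  have hlim : Tendsto (fun R : ℝ ↦ ∫ t in (-R)..R, cexp (↑(-2 * π * t * ξ) * I) • g t) atTop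
      (𝓝 (𝓕 g ξ)) := by
    rw [Real.fourier_real_eq_integral_exp_smul]
    exact intervalIntegral_tendsto_integral hexp_int tendsto_neg_atTop_atBot tendsto_id
  have hsum := ((hboundary htop).sub ((hboundary hbot).comp tendsto_neg_atTop_atBot)).add
    (hlim.const_smul (2 * π * I * ξ))
  rw [sub_zero, zero_add] at hsum
  exact hsum.congr fun R ↦ (integral_cexp_smul_deriv (fun t _ ↦ hderiv t) (hf _ _) ξ).symm

lemma fourier_indicator_Ioc (f : ℝ → E) {a b : ℝ} (hab : a ≤ b) (ξ : ℝ) :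
    𝓕 ((Ioc a b).indicator f) ξ = ∫ t in a..b, cexp (↑(-2 * π * t * ξ) * I) • f t := by
  rw [Real.fourier_real_eq_integral_exp_smul, integral_of_le hab,
    ← MeasureTheory.integral_indicator measurableSet_Ioc]
  simp only [indicator_smul]

end Fourier

section InnerProduct

lemma norm_integral_inner_le_of_norm_fourier_le {V E : Type*} [NormedAddCommGroup V]
    [InnerProductSpace ℝ V] [FiniteDimensional ℝ V] [MeasurableSpace V] [BorelSpace V]
    [NormedAddCommGroup E] [InnerProductSpace ℂ E] [CompleteSpace E] {g h : V → E} {C : ℝ}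
    (hg : Integrable g) (hgc : Continuous g) (hĝ : Integrable (𝓕 g)) (hh : Integrable h)
    (hC : ∀ ξ, ‖𝓕 h ξ‖ ≤ C) : ‖∫ x, ⟪h x, g x⟫_ℂ‖ ≤ C * ∫ ξ, ‖𝓕 g ξ‖ := by
  have hduality : ∫ ξ, ⟪𝓕 h ξ, 𝓕 g ξ⟫_ℂ = ∫ x, ⟪h x, 𝓕⁻ (𝓕 g) x⟫_ℂ := by
    have := VectorFourier.integral_sesq_fourierIntegral_eq_neg_flip (μ := volume) (ν := volume)
      (L := innerₗ V) (innerSL ℂ) Real.continuous_fourierChar continuous_inner hh hĝ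
    rwa [flip_innerₗ] at this
  rw [hgc.fourierInv_fourier_eq hg hĝ] at hduality
  rw [← hduality, ← MeasureTheory.integral_const_mul]
  refine MeasureTheory.norm_integral_le_of_norm_le (hĝ.norm.const_mul C) (.of_forall fun ξ ↦ ?_)
  exact (norm_inner_le_norm _ _).trans (by gcongr; exact hC ξ)

lemma integral_inner_indicator_Ioc {𝕜 E : Type*} [RCLike 𝕜] [NormedAddCommGroup E]
    [InnerProductSpace 𝕜 E] (f g : ℝ → E) {a b : ℝ} (hab : a ≤ b) :
    ∫ x, ⟪(Ioc a b).indicator f x, g x⟫_𝕜 = ∫ x in a..b, ⟪f x, g x⟫_𝕜 := by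
  rw [integral_of_le hab, ← MeasureTheory.integral_indicator measurableSet_Ioc]
  congr 1 with x
  by_cases hx : x ∈ Ioc a b <;> simp [hx]

end InnerProduct

section QuarticChirp

/-- The oscillating factor `e^{it⁴/4}` of `f(t) = t e^{it⁴/4}`, with the exponent in the
form used in the statement of the theorem. -/
noncomputable def quarticChirp (t : ℝ) : ℂ := cexp (I * (t : ℂ) ^ 4 / 4)

lemma quarticChirp_eq_cexp_ofReal_mul_I (t : ℝ) : quarticChirp t = cexp ((t ^ 4 / 4 : ℝ) * I) := by
  rw [quarticChirp]
  congr 1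
  push_cast
  ring

lemma norm_quarticChirp (t : ℝ) : ‖quarticChirp t‖ = 1 := by
  rw [quarticChirp_eq_cexp_ofReal_mul_I, norm_exp_ofReal_mul_I]

lemma hasDerivAt_quarticChirp (x : ℝ) :
    HasDerivAt quarticChirp (quarticChirp x * ((x ^ 3 : ℝ) * I)) x := by
  have hphase : HasDerivAt (fun t : ℝ ↦ t ^ 4 / 4) (x ^ 3) x := by
    simpa using hasDerivAt_quartic_add_linear 0 x
  rw [funext quarticChirp_eq_cexp_ofReal_mul_I]
  exact hasDerivAt_cexp_ofReal_mul_I hphase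

lemma continuous_ofReal_mul_quarticChirp : Continuous fun t : ℝ ↦ (t : ℂ) * quarticChirp t := by
  unfold quarticChirp
  fun_prop

lemma odd_ofReal_mul_quarticChirp : (fun t : ℝ ↦ (t : ℂ) * quarticChirp t).Odd := fun t ↦ by
  simp only [quarticChirp, ofReal_neg, (by decide : Even 4).neg_pow, neg_mul]

/-- The first two terms of the asymptotic expansion at `∞` of the primitive of `t e^{it⁴/4}` that
vanishes there, obtained by integrating `t⁻² · t³ e^{it⁴/4}` by parts twice. -/
noncomputable def approxPrimitive (t : ℝ) : ℂ :=
  -(I / (t : ℂ) ^ 2 + 2 / (t : ℂ) ^ 6) * quarticChirp t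

lemma hasDerivAt_approxPrimitive {x : ℝ} (hx : x ≠ 0) :
    HasDerivAt approxPrimitive
      (x * quarticChirp x + 12 / (x : ℂ) ^ 7 * quarticChirp x) x := by
  have hxC : (x : ℂ) ≠ 0 := ofReal_ne_zero.mpr hx
  have hamp := ((hasDerivAt_const_div_pow I 2 hxC).fun_add
    (hasDerivAt_const_div_pow 2 6 hxC)).fun_neg.comp_ofReal
  refine (hamp.fun_mul (hasDerivAt_quarticChirp x)).congr_deriv ?_
  push_cast
  field_simp
  ring_nf
  simp only [I_sq]
  ring

lemma tendsto_approxPrimitive_atTop : Tendsto approxPrimitive atTop (𝓝 0) := by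
  have hpow : ∀ (c : ℂ) {n : ℕ}, n ≠ 0 → Tendsto (fun t : ℝ ↦ c / (t : ℂ) ^ n) atTop (𝓝 0) :=
    fun c n hn ↦ by
      rw [tendsto_zero_iff_norm_tendsto_zero]
      simpa using (tendsto_pow_atTop hn).comp tendsto_abs_atTop_atTop |>.const_div_atTop ‖c‖
  have hamp := ((hpow I two_ne_zero).add (hpow 2 (n := 6) (by norm_num))).neg
  rw [add_zero, neg_zero] at hamp
  rw [tendsto_zero_iff_norm_tendsto_zero] at hamp ⊢
  simpa only [norm_mul, approxPrimitive, norm_quarticChirp, mul_one] using hamp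

variable {g : ℝ → ℂ}

lemma norm_tailPrimitive_add_quarticChirp_le
    (hg : IsTailPrimitive (fun t ↦ (t : ℂ) * quarticChirp t) g) {x : ℝ} (hx : 0 < x) :
    ‖g x + I / (x : ℂ) ^ 2 * quarticChirp x‖ ≤ 4 / x ^ 6 := by
  have hcont := continuous_ofReal_mul_quarticChirp
  have hg_lim := hg.tendsto_atTop_zero hcont.intervalIntegrable
  have hpos : ∀ t ∈ Ici x, t ≠ 0 := fun t ht ↦ (hx.trans_le ht).ne'
  have herror : ‖g x - approxPrimitive x‖ ≤ -(-2 / x ^ 6) := by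
    refine norm_le_neg_of_norm_deriv_le_of_tendsto_zero
      (fun t ht ↦ (hg.hasDerivAt hcont t).fun_sub
        (hasDerivAt_approxPrimitive (hpos t ht)))
      (fun t ht ↦ hasDerivAt_const_div_pow (-2) 6 (hpos t ht)) (fun t ht ↦ ?_)
      (by simpa only [sub_zero] using hg_lim.sub tendsto_approxPrimitive_atTop)
      ((tendsto_pow_atTop (by norm_num)).const_div_atTop _)
    have ht0 : 0 ≤ t := hx.le.trans ht
    rw [sub_add_cancel_left, norm_neg, norm_mul, norm_quarticChirp, mul_one, norm_div, norm_pow,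
      norm_real, Real.norm_of_nonneg ht0]
    norm_num
  have hlower : ‖2 / (x : ℂ) ^ 6 * quarticChirp x‖ = 2 / x ^ 6 := by
    rw [norm_mul, norm_quarticChirp, mul_one, norm_div, norm_pow, norm_real,
      Real.norm_of_nonneg hx.le, Complex.norm_ofNat]
  calc ‖g x + I / (x : ℂ) ^ 2 * quarticChirp x‖
      = ‖(g x - approxPrimitive x) -
          2 / (x : ℂ) ^ 6 * quarticChirp x‖ := by 
        rw [approxPrimitive]
        ring_nf
    _ ≤ -(-2 / x ^ 6) + 2 / x ^ 6 := (norm_sub_le _ _).trans (add_le_add herror hlower.le)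
    _ = 4 / x ^ 6 := by ring

lemma norm_tailPrimitive_le (hg : IsTailPrimitive (fun t ↦ (t : ℂ) * quarticChirp t) g) {x : ℝ}
    (hx : 1 ≤ x) : ‖g x‖ ≤ 5 / x ^ 2 := by
  have hx0 : 0 < x := one_pos.trans_le hx
  have hlead : ‖I / (x : ℂ) ^ 2 * quarticChirp x‖ = 1 / x ^ 2 := by
    rw [norm_mul, norm_quarticChirp, mul_one, norm_div, norm_I, norm_pow, norm_real,
      Real.norm_of_nonneg hx0.le]
  calc ‖g x‖ = ‖(g x + I / (x : ℂ) ^ 2 * quarticChirp x) - I / (x : ℂ) ^ 2 * quarticChirp x‖ := by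
        rw [add_sub_cancel_right]
    _ ≤ 4 / x ^ 6 + 1 / x ^ 2 :=
        (norm_sub_le _ _).trans <|
          add_le_add (norm_tailPrimitive_add_quarticChirp_le hg hx0) hlead.le
    _ ≤ 4 / x ^ 2 + 1 / x ^ 2 := by gcongr; norm_num
    _ = 5 / x ^ 2 := by ring

lemma continuous_tailPrimitive (hg : IsTailPrimitive (fun t ↦ (t : ℂ) * quarticChirp t) g) :
    Continuous g :=
  continuous_iff_continuousAt.mpr fun x ↦
    (hg.hasDerivAt continuous_ofReal_mul_quarticChirp x).continuousAt

lemma integrable_tailPrimitive (hg : IsTailPrimitive (fun t ↦ (t : ℂ) * quarticChirp t) g) :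
    Integrable g := by
  have heven := hg.even continuous_ofReal_mul_quarticChirp.intervalIntegrable
    odd_ofReal_mul_quarticChirp
  have hdecay : g =O[atTop] fun x : ℝ ↦ x ^ (-2 : ℝ) := by
    refine Asymptotics.IsBigO.of_bound 5 ?_
    filter_upwards [eventually_ge_atTop 1] with x hx
    have hx0 : 0 ≤ x := zero_le_one.trans hx
    rw [Real.norm_of_nonneg (Real.rpow_nonneg hx0 _), Real.rpow_neg hx0, Real.rpow_two,
      ← div_eq_mul_inv]
    exact norm_tailPrimitive_le hg hx
  have hloc := (continuous_tailPrimitive hg).locallyIntegrable (μ := volume)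
  exact hloc.integrable_of_isBigO_atTop_of_norm_isNegInvariant
    (.of_forall fun x ↦ by simp only [Function.comp_apply, heven x]) hdecay
    (integrableAtFilter_rpow_atTop_iff.mpr (by norm_num))

lemma norm_inner_tailPrimitive_add_inv_le
    (hg : IsTailPrimitive (fun t ↦ (t : ℂ) * quarticChirp t) g) {x : ℝ} (hx : 0 < x) :
    ‖⟪(x : ℂ) * quarticChirp x, g x⟫_ℂ + I * (x⁻¹ : ℝ)‖ ≤ 4 / x ^ 5 := by
  have hxC : (x : ℂ) ≠ 0 := ofReal_ne_zero.mpr hx.ne'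
  have hlead :
      ⟪(x : ℂ) * quarticChirp x, I / (x : ℂ) ^ 2 * quarticChirp x⟫_ℂ = I * (x⁻¹ : ℝ) := by
    have hunit : quarticChirp x * starRingEnd ℂ (quarticChirp x) = 1 := by
      rw [mul_conj, normSq_eq_norm_sq, norm_quarticChirp, one_pow, ofReal_one]
    calc ⟪(x : ℂ) * quarticChirp x, I / (x : ℂ) ^ 2 * quarticChirp x⟫_ℂ
        = I / (x : ℂ) ^ 2 * x * (quarticChirp x * starRingEnd ℂ (quarticChirp x)) := by
          rw [RCLike.inner_apply, map_mul, conj_ofReal]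
          ring
      _ = I * (x⁻¹ : ℝ) := by
          rw [hunit, ofReal_inv]
          field_simp
  rw [← hlead, ← inner_add_right]
  calc ‖⟪(x : ℂ) * quarticChirp x, g x + I / (x : ℂ) ^ 2 * quarticChirp x⟫_ℂ‖
      ≤ ‖(x : ℂ) * quarticChirp x‖ * ‖g x + I / (x : ℂ) ^ 2 * quarticChirp x‖ :=
        norm_inner_le_norm _ _
    _ ≤ x * (4 / x ^ 6) := by
        rw [norm_mul, norm_quarticChirp, mul_one, norm_real, Real.norm_of_nonneg hx.le]
        gcongr
        exact norm_tailPrimitive_add_quarticChirp_le hg hx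
    _ = 4 / x ^ 5 := by field_simp

lemma norm_integral_inner_tailPrimitive_add_log_le
    (hg : IsTailPrimitive (fun t ↦ (t : ℂ) * quarticChirp t) g) {R : ℝ} (hR : 1 ≤ R) :
    ‖(∫ x in (1 : ℝ)..R, ⟪(x : ℂ) * quarticChirp x, g x⟫_ℂ) + I * Real.log R‖ ≤ 1 := by
  have hpos : ∀ x ∈ Icc 1 R, 0 < x := fun x hx ↦ zero_lt_one.trans_le hx.1
  have hinv_int : IntervalIntegrable (fun x : ℝ ↦ I * (x⁻¹ : ℝ)) volume 1 R := by
    refine ContinuousOn.intervalIntegrable_of_Icc hR fun x hx ↦ ?_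
    have := (hpos x hx).ne'
    fun_prop (disch := assumption)
  have hinner_int :
      IntervalIntegrable (fun x : ℝ ↦ ⟪(x : ℂ) * quarticChirp x, g x⟫_ℂ) volume 1 R :=
    (continuous_ofReal_mul_quarticChirp.inner (continuous_tailPrimitive hg)).intervalIntegrable _ _
  have hlog : I * Real.log R = ∫ x in (1 : ℝ)..R, I * (x⁻¹ : ℝ) := by
    rw [intervalIntegral.integral_const_mul, intervalIntegral.integral_ofReal,
      integral_inv_of_pos one_pos (one_pos.trans_le hR), div_one]
  rw [hlog, ← intervalIntegral.integral_add hinner_int hinv_int]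
  have hbound := norm_integral_le_sub_of_norm_le_deriv (v := fun x ↦ -1 / x ^ 4) hR
    (fun x hx ↦ (hasDerivAt_const_div_pow (-1 : ℝ) 4 (hpos x hx).ne').congr_deriv (by norm_num))
    fun x hx ↦ norm_inner_tailPrimitive_add_inv_le hg (hpos x hx)
  have hvR : -1 / R ^ 4 ≤ 0 := by rw [neg_div]; exact neg_nonpos.mpr (by positivity)
  linarith

lemma norm_fourier_indicator_mul_quarticChirp_le {R : ℝ} (hR : 1 ≤ R) (ξ : ℝ) :
    ‖𝓕 ((Ioc 1 R).indicator fun t : ℝ ↦ (t : ℂ) * quarticChirp t) ξ‖ ≤ 8 := by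
  have hphase : ∀ t : ℝ, cexp (↑(-2 * π * t * ξ) * I) • ((t : ℂ) * quarticChirp t) =
      t * cexp ((t ^ 4 / 4 + -2 * π * ξ * t : ℝ) * I) := fun t ↦ by
    rw [quarticChirp_eq_cexp_ofReal_mul_I, smul_eq_mul, mul_left_comm, ← Complex.exp_add, ← add_mul,
      ← ofReal_add]
    ring_nf
  rw [fourier_indicator_Ioc _ hR]
  simpa only [hphase] using norm_integral_mul_cexp_quartic_le (-2 * π * ξ) hR

lemma not_integrable_fourier_tailPrimitive
    (hg : IsTailPrimitive (fun t ↦ (t : ℂ) * quarticChirp t) g) : ¬ Integrable (𝓕 g) := by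
  intro hint
  have hlog_le : ∀ R : ℝ, 1 ≤ R → Real.log R ≤ 1 + 8 * ∫ ξ, ‖𝓕 g ξ‖ := fun R hR ↦ by
    have htrunc : Integrable ((Ioc 1 R).indicator fun t : ℝ ↦ (t : ℂ) * quarticChirp t) :=
      (continuous_ofReal_mul_quarticChirp.integrableOn_Ioc).integrable_indicator measurableSet_Ioc
    have hdual := norm_integral_inner_le_of_norm_fourier_le (integrable_tailPrimitive hg)
      (continuous_tailPrimitive hg) hint htrunc (norm_fourier_indicator_mul_quarticChirp_le hR)
    rw [integral_inner_indicator_Ioc _ _ hR] at hdual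
    have hasymp := norm_integral_inner_tailPrimitive_add_log_le hg hR
    set J := ∫ x in (1 : ℝ)..R, ⟪(x : ℂ) * quarticChirp x, g x⟫_ℂ
    calc Real.log R = ‖I * Real.log R‖ := by
          rw [norm_mul, norm_I, one_mul, norm_real, Real.norm_of_nonneg (Real.log_nonneg hR)]
      _ = ‖(J + I * Real.log R) - J‖ := by rw [add_sub_cancel_left]
      _ ≤ 1 + 8 * ∫ ξ, ‖𝓕 g ξ‖ := (norm_sub_le _ _).trans (add_le_add hasymp hdual)
  obtain ⟨R, hR, hlarge⟩ := ((eventually_ge_atTop 1).and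
    (Real.tendsto_log_atTop.eventually_gt_atTop (1 + 8 * ∫ ξ, ‖𝓕 g ξ‖))).exists
  exact (hlog_le R hR).not_gt hlarge

lemma tendsto_integral_mul_quarticChirp_mul_cexp
    (hg : IsTailPrimitive (fun t ↦ (t : ℂ) * quarticChirp t) g) (ξ : ℝ) :
    Tendsto (fun R : ℝ ↦ ∫ t in (-R)..R, (t : ℂ) * quarticChirp t * cexp (-2 * π * I * ξ * t))
      atTop (𝓝 (2 * π * I * ξ * 𝓕 g ξ)) := by
  have hcont := continuous_ofReal_mul_quarticChirp
  have hint : ∀ a b, IntervalIntegrable (fun t : ℝ ↦ (t : ℂ) * quarticChirp t) volume a b :=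
    hcont.intervalIntegrable
  have htop : Tendsto g atTop (𝓝 0) := hg.tendsto_atTop_zero hint
  have hbot : Tendsto g atBot (𝓝 0) := (htop.comp tendsto_neg_atBot_atTop).congr
    (hg.even hint odd_ofReal_mul_quarticChirp)
  have hexp : ∀ t : ℝ, (t : ℂ) * quarticChirp t * cexp (-2 * π * I * ξ * t) =
      cexp (↑(-2 * π * t * ξ) * I) • ((t : ℂ) * quarticChirp t) := fun t ↦ by
    rw [smul_eq_mul, mul_comm]
    congr 2
    push_cast
    ring
  simpa only [hexp, smul_eq_mul] using tendsto_integral_cexp_smul_deriv (hg.hasDerivAt hcont) hint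
    (integrable_tailPrimitive hg) hbot htop ξ

end QuarticChirp

/-- Let `f(t) = t e^{it⁴/4}` and let `g(x) = -lim_{R→∞} ∫_x^R f(t) dt`.
Then for every `ξ ≠ 0` the symmetric improper integral `lim_{R→∞} ∫_{-R}^R f(t) e^{-2πiξt} dt`
exists and equals `2πiξ 𝓕[g](ξ)`; moreover `𝓕[g]` is not Lebesgue integrable on `ℝ`. -/
theorem stmt_12 (f g : ℝ → ℂ)
    (hf : ∀ t : ℝ, f t = (t : ℂ) * Complex.exp (Complex.I * (t : ℂ) ^ 4 / 4))
    (hg : ∀ x : ℝ, Tendsto (fun R : ℝ => ∫ t in x..R, f t) atTop (nhds (-g x))) :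
    (∀ ξ : ℝ, ξ ≠ 0 →
      Tendsto (fun R : ℝ => ∫ t in (-R)..R,
          f t * Complex.exp (-2 * (π : ℂ) * Complex.I * (ξ : ℂ) * (t : ℂ)))
        atTop (nhds (2 * (π : ℂ) * Complex.I * (ξ : ℂ) * 𝓕 g ξ))) ∧
    ¬ Integrable (fun ξ : ℝ => 𝓕 g ξ) := by
  obtain rfl : f = fun t : ℝ ↦ (t : ℂ) * quarticChirp t := funext hf
  have hg_tail : IsTailPrimitive (fun t : ℝ ↦ (t : ℂ) * quarticChirp t) g := hg
  exact ⟨fun ξ _ ↦ tendsto_integral_mul_quarticChirp_mul_cexp hg_tail ξ,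
    not_integrable_fourier_tailPrimitive hg_tail⟩
end

section
/- Let f : ℝ → ℂ be defined by f(t) = t·e^{i t⁴/4}, and let g : ℝ → ℂ be the function defined by g(x) = −lim_{R→+∞} ∫_x^R f(t) dt (this limit exists for every x). Then for every real x with |x| ≥ 1, one has |g(x)| ≤ 2/x². -/
open Filter intervalIntegral

/-!
With `u t = t⁻²` and `v t = -i exp (i t⁴ / 4)` one has `t exp (i t⁴ / 4) = u t * v' t`, where `u` is
positive and decreasing on `(0, ∞)` and `‖v‖ = 1`. Integrating by parts on `[x, R]`, the boundary
terms contribute at most `u R + u x` and the remaining integral at most `∫ |u'| = u x - u R`, so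
the total is at most `2 * u x` whatever `R` is. Negative `x` reduce to `|x|` because the integrand
is odd.
-/

open MeasureTheory Set Topology

section DirichletTest

variable {E : Type*} [NormedAddCommGroup E] [NormedSpace ℝ E]

theorem intervalIntegrable_deriv_of_nonpos {u u' : ℝ → ℝ} {a b : ℝ}
    (hu : ∀ t ∈ uIcc a b, HasDerivAt u (u' t) t) (hu' : ∀ t ∈ uIcc a b, u' t ≤ 0) :
    IntervalIntegrable u' volume a b := by
  have hneg : IntervalIntegrable (-u') volume a b :=
    intervalIntegrable_deriv_of_nonneg (g := -u) (HasDerivAt.continuousOn hu).neg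
      (fun t ht ↦ (hu t (Ioo_subset_Icc_self ht)).neg)
      (fun t ht ↦ neg_nonneg.mpr (hu' t (Ioo_subset_Icc_self ht)))
  simpa only [neg_neg] using hneg.neg

theorem norm_integral_deriv_smul_le_of_nonpos {u u' : ℝ → ℝ} {v : ℝ → E} {a b M : ℝ} (hab : a ≤ b)
    (hu : ∀ t ∈ uIcc a b, HasDerivAt u (u' t) t) (hu' : ∀ t ∈ uIcc a b, u' t ≤ 0)
    (hM : ∀ t ∈ uIcc a b, ‖v t‖ ≤ M) :
    ‖∫ t in a..b, u' t • v t‖ ≤ M * (u a - u b) := by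
  have hint : IntervalIntegrable u' volume a b := intervalIntegrable_deriv_of_nonpos hu hu'
  have hbound : ∀ t ∈ Ioc a b, ‖u' t • v t‖ ≤ M * -u' t := fun t ht ↦ by
    have ht' : t ∈ uIcc a b := Ioc_subset_Icc_self.trans Icc_subset_uIcc ht
    rw [norm_smul, Real.norm_of_nonpos (hu' t ht'), mul_comm]
    exact mul_le_mul_of_nonneg_right (hM t ht') (neg_nonneg.mpr (hu' t ht'))
  calc ‖∫ t in a..b, u' t • v t‖
      ≤ ∫ t in a..b, M * -u' t :=
        norm_integral_le_of_norm_le hab (ae_of_all _ hbound) (hint.neg.const_mul M)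
    _ = M * (u a - u b) := by
        rw [intervalIntegral.integral_const_mul, intervalIntegral.integral_neg,
          integral_eq_sub_of_hasDerivAt hu hint, neg_sub]

theorem norm_integral_smul_deriv_le_of_nonpos [CompleteSpace E] {u u' : ℝ → ℝ} {v v' : ℝ → E}
    {a b M : ℝ} (hab : a ≤ b) (hu : ∀ t ∈ uIcc a b, HasDerivAt u (u' t) t)
    (hu' : ∀ t ∈ uIcc a b, u' t ≤ 0) (hub : 0 ≤ u b)
    (hv : ∀ t ∈ uIcc a b, HasDerivAt v (v' t) t) (hv' : IntervalIntegrable v' volume a b)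
    (hM : ∀ t ∈ uIcc a b, ‖v t‖ ≤ M) :
    ‖∫ t in a..b, u t • v' t‖ ≤ 2 * M * u a := by
  have hanti : u b ≤ u a :=
    antitoneOn_of_hasDerivWithinAt_nonpos (convex_uIcc a b) (HasDerivAt.continuousOn hu)
      (fun t ht ↦ (hu t (interior_subset ht)).hasDerivWithinAt)
      (fun t ht ↦ hu' t (interior_subset ht)) left_mem_uIcc right_mem_uIcc hab
  have hboundary : ∀ t ∈ uIcc a b, 0 ≤ u t → ‖u t • v t‖ ≤ u t * M := fun t ht hut ↦ by
    rw [norm_smul, Real.norm_of_nonneg hut]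
    exact mul_le_mul_of_nonneg_left (hM t ht) hut
  rw [integral_smul_deriv_eq_deriv_smul hu hv (intervalIntegrable_deriv_of_nonpos hu hu') hv']
  calc ‖u b • v b - u a • v a - ∫ t in a..b, u' t • v t‖
      ≤ ‖u b • v b‖ + ‖u a • v a‖ + ‖∫ t in a..b, u' t • v t‖ :=
        (norm_sub_le _ _).trans (add_le_add_left (norm_sub_le _ _) _)
    _ ≤ u b * M + u a * M + M * (u a - u b) := by
        gcongr
        · exact hboundary b right_mem_uIcc hub
        · exact hboundary a left_mem_uIcc (hub.trans hanti)
        · exact norm_integral_deriv_smul_le_of_nonpos hab hu hu' hM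
    _ = 2 * M * u a := by ring

end DirichletTest

section OddFunction

variable {E : Type*} [NormedAddCommGroup E] [NormedSpace ℝ E] {f : ℝ → E}

theorem integral_neg_self_eq_zero_of_odd (hf : f.Odd) (a : ℝ) : ∫ t in -a..a, f t = 0 := by
  have hneg : ∫ t in -a..a, f t = -∫ t in -a..a, f t := by
    calc ∫ t in -a..a, f t = ∫ t in -a..a, f (-t) := by rw [integral_comp_neg, neg_neg]
      _ = -∫ t in -a..a, f t := by simp only [hf.eq, intervalIntegral.integral_neg]
  have : IsAddTorsionFree E := .of_isTorsionFree ℝ E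
  exact self_eq_neg.mp hneg

theorem integral_abs_left_of_odd (hodd : f.Odd)
    (hf : ∀ a b, IntervalIntegrable f volume a b) (a b : ℝ) :
    ∫ t in |a|..b, f t = ∫ t in a..b, f t := by
  rcases abs_choice a with ha | ha
  · rw [ha]
  · rw [ha, ← integral_add_adjacent_intervals (hf (-a) a) (hf a b),
      integral_neg_self_eq_zero_of_odd hodd, zero_add]

end OddFunction

section MonomialPhase

theorem hasDerivAt_neg_I_mul_cexp_pow_div {n : ℕ} (hn : n ≠ 0) (t : ℝ) :
    HasDerivAt (fun t : ℝ ↦ -Complex.I * Complex.exp (Complex.I * (t : ℂ) ^ n / n))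
      ((t : ℂ) ^ (n - 1) * Complex.exp (Complex.I * (t : ℂ) ^ n / n)) t := by
  have hphase : HasDerivAt (fun z : ℂ ↦ Complex.I * z ^ n / n)
      (Complex.I * (t : ℂ) ^ (n - 1)) (t : ℂ) := by
    refine (((hasDerivAt_pow n (t : ℂ)).const_mul Complex.I).div_const (n : ℂ)).congr_deriv ?_
    field_simp
  refine (hphase.cexp.const_mul (-Complex.I)).comp_ofReal.congr_deriv ?_
  linear_combination
    (-(t : ℂ) ^ (n - 1) * Complex.exp (Complex.I * (t : ℂ) ^ n / n)) * Complex.I_mul_I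

theorem norm_cexp_I_mul_pow_div (n : ℕ) (t : ℝ) :
    ‖Complex.exp (Complex.I * (t : ℂ) ^ n / n)‖ = 1 := by
  rw [show Complex.I * (t : ℂ) ^ n / n = Complex.I * ((t ^ n / n : ℝ) : ℂ) by push_cast; ring,
    Complex.norm_exp_I_mul_ofReal]

/-- The oscillating integrand `t ^ m * exp (i t ^ n / n)`, whose amplitude and phase are monomials;
the function `f` of the theorem is `monomialOscillation 1 4`. -/
noncomputable def monomialOscillation (m n : ℕ) (t : ℝ) : ℂ :=
  (t : ℂ) ^ m * Complex.exp (Complex.I * (t : ℂ) ^ n / n)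

theorem continuous_monomialOscillation (m n : ℕ) : Continuous (monomialOscillation m n) := by
  unfold monomialOscillation
  fun_prop

theorem odd_monomialOscillation {m n : ℕ} (hm : Odd m) (hn : Even n) :
    (monomialOscillation m n).Odd := fun t ↦ by
  simp only [monomialOscillation, Complex.ofReal_neg, hm.neg_pow, hn.neg_pow, neg_mul]

theorem norm_integral_monomialOscillation_le (m k : ℕ) {a b : ℝ} (ha : 0 < a) (hab : a ≤ b) :
    ‖∫ t in a..b, monomialOscillation m (m + k + 1) t‖ ≤ 2 / a ^ k := by
  have hpos : ∀ t ∈ uIcc a b, 0 < t := fun t ht ↦ ha.trans_le (uIcc_of_le hab ▸ ht).1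
  have hfactor : ∀ t ∈ uIcc a b, monomialOscillation m (m + k + 1) t =
      (t ^ k)⁻¹ • monomialOscillation (m + k) (m + k + 1) t := fun t ht ↦ by
    have ht0 : (t : ℂ) ≠ 0 := Complex.ofReal_ne_zero.mpr (hpos t ht).ne'
    simp only [monomialOscillation, Complex.real_smul]
    push_cast
    field_simp
    ring
  have hamplitude : ∀ t ∈ uIcc a b, HasDerivAt (fun t : ℝ ↦ (t ^ k)⁻¹)
      (-(k * t ^ (k - 1)) / (t ^ k) ^ 2) t := fun t ht ↦
    (hasDerivAt_pow k t).fun_inv (pow_ne_zero k (hpos t ht).ne')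
  have hdecreasing : ∀ t ∈ uIcc a b, -(k * t ^ (k - 1)) / (t ^ k) ^ 2 ≤ 0 := fun t ht ↦ by
    have := hpos t ht
    rw [neg_div]
    exact neg_nonpos.mpr (by positivity)
  have hbpos : 0 < b := ha.trans_le hab
  rw [integral_congr hfactor]
  calc ‖∫ t in a..b, (t ^ k)⁻¹ • monomialOscillation (m + k) (m + k + 1) t‖
      ≤ 2 * 1 * (a ^ k)⁻¹ :=
        norm_integral_smul_deriv_le_of_nonpos hab hamplitude hdecreasing (by positivity)
          (fun t _ ↦ hasDerivAt_neg_I_mul_cexp_pow_div (m + k).succ_ne_zero t)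
          ((continuous_monomialOscillation _ _).intervalIntegrable a b)
          (fun t _ ↦ by
            rw [norm_mul, norm_cexp_I_mul_pow_div, norm_neg, Complex.norm_I, mul_one])
    _ = 2 / a ^ k := by rw [mul_one, div_eq_mul_inv]

end MonomialPhase

theorem stmt_13_general {m k : ℕ} (hm : Odd m) (hk : Even k) {x : ℝ} (hx : x ≠ 0) {L : ℂ}
    (hL : Tendsto (fun R : ℝ ↦ ∫ t in x..R, monomialOscillation m (m + k + 1) t) atTop (𝓝 L)) :
    ‖L‖ ≤ 2 / x ^ k := by
  have hodd : (monomialOscillation m (m + k + 1)).Odd :=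
    odd_monomialOscillation hm (hm.add_even hk).add_one
  refine le_of_tendsto hL.norm ?_
  filter_upwards [eventually_ge_atTop |x|] with R hR
  rw [← integral_abs_left_of_odd hodd
    (continuous_monomialOscillation _ _).intervalIntegrable, ← hk.pow_abs]
  exact norm_integral_monomialOscillation_le m k (abs_pos.mpr hx) hR

/-- Let `f(t) = t e^{it⁴/4}` and `g(x) = -lim_{R→∞} ∫_x^R f(t) dt`.
Then `|g(x)| ≤ 2/x²` for every real `x` with `|x| ≥ 1`. -/
theorem stmt_13 (f g : ℝ → ℂ)
    (hf : ∀ t : ℝ, f t = (t : ℂ) * Complex.exp (Complex.I * (t : ℂ) ^ 4 / 4))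
    (hg : ∀ x : ℝ, Tendsto (fun R : ℝ => ∫ t in x..R, f t) atTop (nhds (-g x))) :
    ∀ x : ℝ, 1 ≤ |x| → ‖g x‖ ≤ 2 / x ^ 2 := by
  obtain rfl : f = monomialOscillation 1 4 :=
    funext fun t ↦ by simp only [hf, monomialOscillation, pow_one, Nat.cast_ofNat]
  intro x hx
  rw [← norm_neg]
  exact stmt_13_general odd_one even_two (abs_pos.mp (one_pos.trans_le hx)) (hg x)
end

section
/- Let f : ℝ → ℂ be defined by f(t) = e^{i t²}/(1 + t²). Then f is Lebesgue integrable on ℝ, and π^{3/2} · ξ² · |𝓕[f](ξ)| → 1 as |ξ| → +∞. In particular, 𝓕[f] decays slowly: there is no a > 0 such that 𝓕[f](ξ) = O(e^{−a|ξ|}) as |ξ| → ∞, and there is no r > 2 such that 𝓕[f](ξ) = O(|ξ|^{−r}) as |ξ| → ∞. -/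
open Filter MeasureTheory FourierTransform Real Asymptotics
open Set (Ioi Ici Iic)
open scoped Topology Polynomial

/-!
The Lorentzian `1/(1+t²)` is the Fourier transform of `π e^{-2π|s|}`. Parseval's identity against
a Gaussian `e^{-πbt²}`, continued from `0 < Re b` to the imaginary axis, shows that multiplying a
Fourier transform `𝓕 φ` by a chirp `e^{iπct²}` amounts, up to a unimodular factor, the constant
`|c|^{-1/2}` and the dilation `ξ ↦ ξ/c`, to multiplying `φ` by the chirp `e^{-iπs²/c}`. So `|𝓕 f|`
is governed by the Fourier transform of `e^{-2π|s| - iπ²s²}`. This function is smooth except for a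
jump of its derivative at `0`; after two integrations by parts the jump contributes the exact
`ξ^{-2}` term, and the rest is `o(ξ^{-2})` by the Riemann–Lebesgue lemma.
-/

section Fourier

variable {V E : Type*} [NormedAddCommGroup V] [InnerProductSpace ℝ V] [MeasurableSpace V]
  [BorelSpace V] [FiniteDimensional ℝ V] [NormedAddCommGroup E] [NormedSpace ℂ E]

lemma norm_fourier_le_integral_norm (f : V → E) (ξ : V) : ‖𝓕 f ξ‖ ≤ ∫ x, ‖f x‖ :=
  VectorFourier.norm_fourierIntegral_le_integral_norm 𝐞 volume (innerₗ V) f ξ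

lemma fourier_const_smul (c : ℂ) (f : V → E) (ξ : V) : 𝓕 (fun x => c • f x) ξ = c • 𝓕 f ξ :=
  congrFun (VectorFourier.fourierIntegral_const_smul 𝐞 volume (innerₗ V) f c) ξ

end Fourier

section EvenFunctions

variable {E : Type*} [NormedAddCommGroup E] {u u' u'' : ℝ → E}

lemma integrable_comp_abs (hu : IntegrableOn u (Ioi 0)) : Integrable fun s => u |s| := by
  have h_Ioi : IntegrableOn (fun s => u |s|) (Ioi 0) :=
    hu.congr_fun (fun s hs => by rw [abs_of_pos hs]) measurableSet_Ioi
  have h_Iic : IntegrableOn (fun s => u |s|) (Iic 0) := by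
    rw [← (Measure.measurePreserving_neg volume).integrableOn_comp_preimage
      (Homeomorph.neg ℝ).measurableEmbedding]
    simpa [Function.comp_def, integrableOn_Ici_iff_integrableOn_Ioi] using h_Ioi
  rw [← integrableOn_univ, ← Set.Iic_union_Ioi (a := (0 : ℝ))]
  exact h_Iic.union h_Ioi

lemma integral_comp_abs_eq_two_smul [NormedSpace ℝ E] (hu : IntegrableOn u (Ioi 0)) :
    ∫ s, u |s| = (2 : ℝ) • ∫ s in Ioi 0, u s := by
  have hint := integrable_comp_abs hu
  have h_Ioi : ∫ s in Ioi 0, u |s| = ∫ s in Ioi 0, u s :=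
    setIntegral_congr_fun measurableSet_Ioi fun s hs => by rw [abs_of_pos hs]
  have h_Iic : ∫ s in Iic 0, u |s| = ∫ s in Ioi 0, u s := by
    simpa [h_Ioi] using integral_comp_neg_Iic 0 fun s => u |s|
  rw [← intervalIntegral.integral_Iic_add_Ioi hint.integrableOn hint.integrableOn,
    h_Iic, h_Ioi, two_smul]

lemma integrableOn_cos_smul [NormedSpace ℝ E] {S : Set ℝ} (hu : IntegrableOn u S) (ω : ℝ) :
    IntegrableOn (fun s => cos (ω * s) • u s) S :=
  hu.bdd_smul 1 (by fun_prop) (.of_forall fun s => abs_cos_le_one _)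

lemma integrableOn_sin_smul [NormedSpace ℝ E] {S : Set ℝ} (hu : IntegrableOn u S) (ω : ℝ) :
    IntegrableOn (fun s => sin (ω * s) • u s) S :=
  hu.bdd_smul 1 (by fun_prop) (.of_forall fun s => abs_sin_le_one _)

/-- `u` is twice differentiable on `[0, ∞)`, with derivatives `u'` and `u''`, and all three
functions are integrable there. -/
structure HasIntegrableDerivs {E : Type*} [NormedAddCommGroup E] [NormedSpace ℝ E]
    (u u' u'' : ℝ → E) : Prop where
  hasDerivAt : ∀ s ∈ Ici 0, HasDerivAt u (u' s) s
  hasDerivAt_deriv : ∀ s ∈ Ici 0, HasDerivAt u' (u'' s) s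
  integrableOn : IntegrableOn u (Ioi 0)
  integrableOn_deriv : IntegrableOn u' (Ioi 0)
  integrableOn_deriv_deriv : IntegrableOn u'' (Ioi 0)

lemma integral_Ioi_cos_smul_deriv_deriv [NormedSpace ℝ E] [CompleteSpace E]
    (h : HasIntegrableDerivs u u' u'') (ω : ℝ) :
    ∫ s in Ioi 0, cos (ω * s) • u'' s =
      -u' 0 - ω ^ 2 • ∫ s in Ioi 0, cos (ω * s) • u s := by
  have hprim : ∀ s ∈ Ici (0 : ℝ), HasDerivAt
      (fun s => cos (ω * s) • u' s + ω • sin (ω * s) • u s)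
      (cos (ω * s) • u'' s + ω ^ 2 • cos (ω * s) • u s) s := fun s hs => by
    have hlin : HasDerivAt (fun s => ω * s) ω s := by simpa using (hasDerivAt_id s).const_mul ω
    refine ((hlin.cos.fun_smul (h.hasDerivAt_deriv s hs)).fun_add
      ((hlin.sin.fun_smul (h.hasDerivAt s hs)).fun_const_smul ω)).congr_deriv ?_
    module
  have hint_cos := (integrableOn_cos_smul h.integrableOn ω).integrable.fun_smul (ω ^ 2)
  have hint := (integrableOn_cos_smul h.integrableOn_deriv_deriv ω).integrable.fun_add hint_cos
  have hprim_zero := tendsto_zero_of_hasDerivAt_of_integrableOn_Ioi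
    (fun s hs => hprim s hs.out.le) hint
    ((integrableOn_cos_smul h.integrableOn_deriv ω).integrable.fun_add
      ((integrableOn_sin_smul h.integrableOn ω).integrable.fun_smul ω))
  have hFTC := integral_Ioi_of_hasDerivAt_of_tendsto' hprim hint hprim_zero
  rw [integral_add (integrableOn_cos_smul h.integrableOn_deriv_deriv ω) hint_cos,
    integral_smul] at hFTC
  simpa [eq_sub_iff_add_eq] using hFTC

variable [NormedSpace ℂ E]

lemma fourier_comp_abs (hu : IntegrableOn u (Ioi 0)) (η : ℝ) :
    𝓕 (fun s => u |s|) η = (2 : ℝ) • ∫ s in Ioi 0, cos (2 * π * η * s) • u s := by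
  set g : ℝ → E := fun s => Complex.exp (↑(-2 * π * s * η) * Complex.I) • u |s| with hg
  have hint : Integrable g := (integrable_comp_abs hu).bdd_smul 1 (by fun_prop)
      (.of_forall fun s => (Complex.norm_exp_ofReal_mul_I _).le)
  have hsymm : ∀ s : ℝ, g s + g (-s) = (2 : ℝ) • cos (2 * π * η * |s|) • u |s| := fun s => by
    have hcos : cos (2 * π * η * |s|) = cos (2 * π * s * η) := by
      rcases abs_choice s with hs | hs <;> simp [hs, mul_right_comm]
    rw [hcos, smul_smul, ← Complex.coe_smul]
    simp only [hg, abs_neg, ← add_smul]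
    push_cast
    rw [Complex.two_cos]
    ring_nf
  have htwice : (2 : ℝ) • 𝓕 (fun s => u |s|) η =
      (2 : ℝ) • (2 : ℝ) • ∫ s in Ioi 0, cos (2 * π * η * s) • u s := by
    calc (2 : ℝ) • 𝓕 (fun s => u |s|) η = ∫ s, (g s + g (-s)) := by
          rw [integral_add hint hint.comp_neg, integral_neg_eq_self, two_smul,
            fourier_real_eq_integral_exp_smul]
      _ = _ := by
          simp only [hsymm]
          rw [integral_smul, integral_comp_abs_eq_two_smul (integrableOn_cos_smul hu _)]
  exact smul_right_injective E two_ne_zero htwice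

lemma sq_smul_fourier_comp_abs [CompleteSpace E] (h : HasIntegrableDerivs u u' u'') (η : ℝ) :
    (2 * π * η) ^ 2 • 𝓕 (fun s => u |s|) η = -(2 : ℝ) • u' 0 - 𝓕 (fun s => u'' |s|) η := by
  rw [fourier_comp_abs h.integrableOn, fourier_comp_abs h.integrableOn_deriv_deriv,
    integral_Ioi_cos_smul_deriv_deriv h]
  module

lemma tendsto_sq_smul_fourier_comp_abs [CompleteSpace E] (h : HasIntegrableDerivs u u' u'') :
    Tendsto (fun η : ℝ => (2 * π * η) ^ 2 • 𝓕 (fun s => u |s|) η) (cocompact ℝ)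
      (𝓝 (-(2 : ℝ) • u' 0)) := by
  simpa only [sq_smul_fourier_comp_abs h, sub_zero] using
    (zero_at_infty_fourier fun s => u'' |s|).const_sub (-(2 : ℝ) • u' 0)

lemma integrable_fourier_comp_abs [CompleteSpace E] (h : HasIntegrableDerivs u u' u'') :
    Integrable (𝓕 fun s => u |s|) := by
  have hcont : Continuous (𝓕 fun s => u |s|) :=
    VectorFourier.fourierIntegral_continuous continuous_fourierChar (by fun_prop)
      (integrable_comp_abs h.integrableOn)
  set M := (∫ s, ‖u |s|‖) + (‖-(2 : ℝ) • u' 0‖ + ∫ s, ‖u'' |s|‖)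
  have hbound : ∀ η : ℝ, ‖𝓕 (fun s => u |s|) η‖ ≤ M * (1 + (2 * π * η) ^ 2)⁻¹ := fun η => by
    have hsq : ‖(2 * π * η) ^ 2 • 𝓕 (fun s => u |s|) η‖ ≤
        ‖-(2 : ℝ) • u' 0‖ + ∫ s, ‖u'' |s|‖ := by
      rw [sq_smul_fourier_comp_abs h]
      grw [norm_sub_le, norm_fourier_le_integral_norm]
    rw [← div_eq_mul_inv, le_div_iff₀ (by positivity), mul_add, mul_one]
    refine add_le_add (norm_fourier_le_integral_norm _ η) ?_
    rwa [norm_smul, norm_of_nonneg (sq_nonneg _), mul_comm] at hsq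
  exact ((integrable_inv_one_add_sq.comp_mul_left' (by positivity)).const_mul M).mono'
    hcont.aestronglyMeasurable (.of_forall hbound)

end EvenFunctions

section PolynomialMulExp

open Polynomial

/-- `p(s) e^{-(a s + b s²)}`. With a polynomial prefactor the family is closed under
differentiation, so it contains both derivatives of `e^{-(a s + b s²)}`. -/
noncomputable def polyMulExp (a b : ℂ) (p : ℂ[X]) (s : ℝ) : ℂ :=
  p.eval (s : ℂ) * Complex.exp (-(a * s + b * s ^ 2))

lemma hasDerivAt_polyMulExp (a b : ℂ) (p : ℂ[X]) (s : ℝ) :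
    HasDerivAt (polyMulExp a b p)
      (polyMulExp a b (derivative p - (C a + C (2 * b) * X) * p) s) s := by
  have hexp : HasDerivAt (fun z : ℂ => Complex.exp (-(a * z + b * z ^ 2)))
      (Complex.exp (-(a * s + b * s ^ 2)) * -(a + 2 * b * s)) s := by
    refine (((hasDerivAt_id' (s : ℂ)).const_mul a).fun_add
      ((hasDerivAt_pow 2 (s : ℂ)).const_mul b)).fun_neg.cexp.congr_deriv ?_
    push_cast
    ring
  refine ((p.hasDerivAt s).fun_mul hexp).comp_ofReal.congr_deriv ?_
  simp only [polyMulExp, eval_sub, eval_mul, eval_add, eval_C, eval_X]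
  ring

variable {a b : ℂ}

lemma norm_cexp_neg_quadratic_le (hb : 0 ≤ b.re) (s : ℝ) :
    ‖Complex.exp (-(a * s + b * s ^ 2))‖ ≤ exp (-a.re * s) := by
  have hre : (-(a * s + b * s ^ 2) : ℂ).re = -(a.re * s + b.re * s ^ 2) := by
    simp [← Complex.ofReal_pow]
  rw [Complex.norm_exp, exp_le_exp, hre]
  linarith [mul_nonneg hb (sq_nonneg s)]

lemma integrableOn_Ioi_polyMulExp (ha : 0 < a.re) (hb : 0 ≤ b.re) (p : ℂ[X]) :
    IntegrableOn (polyMulExp a b p) (Ioi 0) := by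
  induction p using Polynomial.induction_on' with
  | add p q hp hq =>
    exact (hp.add hq).congr_fun (fun s _ => by simp [polyMulExp, add_mul]) measurableSet_Ioi
  | monomial n c =>
    have hbound : IntegrableOn (fun s : ℝ => ‖c‖ * (s ^ (n : ℝ) * exp (-a.re * s ^ (1 : ℝ))))
        (Ioi 0) :=
      (integrableOn_rpow_mul_exp_neg_mul_rpow (by linarith [n.cast_nonneg (α := ℝ)]) one_pos
        ha).const_mul _
    refine hbound.mono' (by unfold polyMulExp; fun_prop) ?_
    filter_upwards [ae_restrict_mem measurableSet_Ioi] with s (hs : 0 < s)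
    simp only [polyMulExp, eval_monomial, norm_mul, norm_pow, Complex.norm_real,
      norm_of_nonneg hs.le, rpow_natCast, rpow_one, mul_assoc]
    gcongr
    simpa only [neg_mul] using norm_cexp_neg_quadratic_le (a := a) hb s

lemma hasIntegrableDerivs_polyMulExp_one (ha : 0 < a.re) (hb : 0 ≤ b.re) :
    HasIntegrableDerivs (polyMulExp a b 1) (polyMulExp a b (-(C a + C (2 * b) * X)))
      (polyMulExp a b ((C a + C (2 * b) * X) ^ 2 - C (2 * b))) where
  hasDerivAt s _ := by simpa using hasDerivAt_polyMulExp a b 1 s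
  hasDerivAt_deriv s _ := by
    have hpoly : (C a + C (2 * b) * X) ^ 2 - C (2 * b) = derivative (-(C a + C (2 * b) * X)) -
        (C a + C (2 * b) * X) * -(C a + C (2 * b) * X) := by
      rw [derivative_neg, derivative_add, derivative_C, derivative_C_mul_X]
      ring
    rw [hpoly]
    exact hasDerivAt_polyMulExp a b _ s
  integrableOn := integrableOn_Ioi_polyMulExp ha hb _
  integrableOn_deriv := integrableOn_Ioi_polyMulExp ha hb _
  integrableOn_deriv_deriv := integrableOn_Ioi_polyMulExp ha hb _

lemma polyMulExp_one_abs (a b : ℂ) (s : ℝ) :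
    polyMulExp a b 1 |s| = Complex.exp (-(a * |s| + b * s ^ 2)) := by
  simp [polyMulExp, ← Complex.ofReal_pow]

lemma integrable_cexp_neg_quadratic_abs (ha : 0 < a.re) (hb : 0 ≤ b.re) :
    Integrable fun s : ℝ => Complex.exp (-(a * |s| + b * s ^ 2)) := by
  simpa only [polyMulExp_one_abs] using integrable_comp_abs (integrableOn_Ioi_polyMulExp ha hb 1)

lemma integrable_fourier_cexp_neg_quadratic_abs (ha : 0 < a.re) (hb : 0 ≤ b.re) :
    Integrable (𝓕 fun s : ℝ => Complex.exp (-(a * |s| + b * s ^ 2))) := by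
  simpa only [polyMulExp_one_abs] using
    integrable_fourier_comp_abs (hasIntegrableDerivs_polyMulExp_one ha hb)

lemma tendsto_sq_smul_fourier_cexp_neg_quadratic_abs (ha : 0 < a.re) (hb : 0 ≤ b.re) :
    Tendsto (fun η : ℝ =>
      (2 * π * η) ^ 2 • 𝓕 (fun s : ℝ => Complex.exp (-(a * |s| + b * s ^ 2))) η)
      (cocompact ℝ) (𝓝 (2 * a)) := by
  have hjump : -(2 : ℝ) • polyMulExp a b (-(C a + C (2 * b) * X)) 0 = 2 * a := by
    simp [polyMulExp]
  simpa only [polyMulExp_one_abs, hjump] using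
    tendsto_sq_smul_fourier_comp_abs (hasIntegrableDerivs_polyMulExp_one ha hb)

lemma fourier_cexp_neg_mul_abs (ha : 0 < a.re) (η : ℝ) :
    𝓕 (fun s : ℝ => Complex.exp (-(a * |s|))) η = 2 * a / (a ^ 2 + (2 * π * η) ^ 2) := by
  have hu : (fun s : ℝ => polyMulExp a 0 1 |s|) = fun s : ℝ => Complex.exp (-(a * |s|)) := by
    simp [polyMulExp]
  have hu'' : (fun s : ℝ => polyMulExp a 0 ((C a + C (2 * 0) * X) ^ 2 - C (2 * 0)) |s|) =
      fun s : ℝ => a ^ 2 • Complex.exp (-(a * |s|)) := by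
    simp [polyMulExp]
  have hode := sq_smul_fourier_comp_abs
    (hasIntegrableDerivs_polyMulExp_one (b := 0) ha (le_refl 0)) η
  rw [hu, hu'', fourier_const_smul] at hode
  have hjump : polyMulExp a 0 (-(C a + C (2 * 0) * X)) 0 = -a := by simp [polyMulExp]
  have ha₀ : a ≠ 0 := fun h => by simp [h] at ha
  have hmul : (a ^ 2 + (2 * π * η) ^ 2) * 𝓕 (fun s : ℝ => Complex.exp (-(a * |s|))) η =
      2 * a := by
    rw [hjump, Complex.real_smul, Complex.real_smul, smul_eq_mul] at hode
    push_cast at hode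
    linear_combination hode
  exact eq_div_of_mul_eq (left_ne_zero_of_mul (hmul ▸ mul_ne_zero two_ne_zero ha₀))
    (by rw [mul_comm, hmul])

end PolynomialMulExp

section Chirp

lemma mem_slitPlane_of_re_nonneg {z : ℂ} (hz : 0 ≤ z.re) (hz₀ : z ≠ 0) :
    z ∈ Complex.slitPlane :=
  hz.lt_or_eq.imp id fun hre him => hz₀ (Complex.ext hre.symm him)

variable {E : Type*} [NormedAddCommGroup E] [NormedSpace ℂ E]

lemma continuousOn_integral_cexp_neg_mul_smul {α : Type*} [MeasurableSpace α] {μ : Measure α}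
    {q : α → ℝ} {φ : α → E} (hq : Measurable q) (hq_nonneg : ∀ x, 0 ≤ q x)
    (hφ : Integrable φ μ) :
    ContinuousOn (fun z : ℂ => ∫ x, Complex.exp (-z * q x) • φ x ∂μ) {z | 0 ≤ z.re} := by
  refine continuousOn_of_dominated (bound := fun x => ‖φ x‖)
    (fun z _ => (by fun_prop : Measurable fun x => Complex.exp (-z * q x)).aestronglyMeasurable.smul
      hφ.aestronglyMeasurable) (fun z hz => .of_forall fun x => ?_) hφ.norm
    (.of_forall fun x => by fun_prop)
  have hexp : ‖Complex.exp (-z * q x)‖ ≤ 1 := by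
    simpa [Complex.norm_exp] using mul_nonneg hz (hq_nonneg x)
  rw [norm_smul]
  exact mul_le_of_le_one_left (norm_nonneg _) hexp

variable [CompleteSpace E] {φ : ℝ → E} {b : ℂ}

lemma fourier_gaussian_smul_fourier_of_re_pos (hφ : Integrable φ) (hb : 0 < b.re) (ξ : ℝ) :
    𝓕 (fun t : ℝ => Complex.exp (-b * ↑(π * t ^ 2)) • 𝓕 φ t) ξ =
      (1 / b ^ (1 / 2 : ℂ)) • ∫ s : ℝ, Complex.exp (-b⁻¹ * ↑(π * (s + ξ) ^ 2)) • φ s := by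
  set γ : ℝ → ℂ := fun t =>
    Complex.exp (-π * b * t ^ 2 + 2 * π * (-Complex.I * ξ) * t) with hγ_def
  have hγ : Integrable γ := by
    simpa [hγ_def] using integrable_cexp_quadratic (b := π * b) (by simpa using mul_pos pi_pos hb)
      (2 * π * (-Complex.I * ξ)) 0
  have hγ_fourier : ∀ s : ℝ, 𝓕 γ s =
      (1 / b ^ (1 / 2 : ℂ)) * Complex.exp (-b⁻¹ * ↑(π * (s + ξ) ^ 2)) := fun s => by
    have hshift : (s + Complex.I * (-Complex.I * ξ) : ℂ) = s + ξ := by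
      linear_combination (-ξ : ℂ) * Complex.I_sq
    simp only [hγ_def, fourier_gaussian_pi' hb, hshift]
    push_cast
    ring_nf
  have hparseval := VectorFourier.integral_fourierIntegral_smul_eq_flip (μ := volume)
    (ν := volume) (L := innerₗ ℝ) (e := 𝐞) continuous_fourierChar (by fun_prop) hγ hφ
  rw [flip_innerₗ] at hparseval
  calc 𝓕 (fun t : ℝ => Complex.exp (-b * ↑(π * t ^ 2)) • 𝓕 φ t) ξ = ∫ t, γ t • 𝓕 φ t := by
        rw [fourier_real_eq_integral_exp_smul]
        refine integral_congr_ae (.of_forall fun t => ?_)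
        simp only [hγ_def, smul_smul, ← Complex.exp_add]
        congr 2
        push_cast
        ring
    _ = ∫ s, 𝓕 γ s • φ s := hparseval.symm
    _ = _ := by simp only [hγ_fourier, mul_smul, integral_smul]

lemma fourier_gaussian_smul_fourier (hφ : Integrable φ) (hφ' : Integrable (𝓕 φ))
    (hb : 0 ≤ b.re) (hb₀ : b ≠ 0) (ξ : ℝ) :
    𝓕 (fun t : ℝ => Complex.exp (-b * ↑(π * t ^ 2)) • 𝓕 φ t) ξ =
      (1 / b ^ (1 / 2 : ℂ)) • ∫ s : ℝ, Complex.exp (-b⁻¹ * ↑(π * (s + ξ) ^ 2)) • φ s := by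
  set D : Set ℂ := {z | 0 ≤ z.re} \ {0}
  have hleft : ContinuousOn
      (fun z => 𝓕 (fun t : ℝ => Complex.exp (-z * ↑(π * t ^ 2)) • 𝓕 φ t) ξ) D := by
    have hmod : Integrable fun t : ℝ => Complex.exp (↑(-2 * π * t * ξ) * Complex.I) • 𝓕 φ t :=
      hφ'.bdd_smul 1 (by fun_prop) (.of_forall fun t => (Complex.norm_exp_ofReal_mul_I _).le)
    refine ((continuousOn_integral_cexp_neg_mul_smul (q := fun t => π * t ^ 2) (by fun_prop)
      (fun t => by positivity) hmod).mono Set.sdiff_subset).congr fun z _ => ?_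
    rw [fourier_real_eq_integral_exp_smul]
    simp only [smul_comm (Complex.exp (-z * _))]
  have hright : ContinuousOn (fun z : ℂ => (1 / z ^ (1 / 2 : ℂ)) •
      ∫ s : ℝ, Complex.exp (-z⁻¹ * ↑(π * (s + ξ) ^ 2)) • φ s) D := by
    have hpow : ContinuousOn (fun z : ℂ => 1 / z ^ (1 / 2 : ℂ)) D := by
      refine continuousOn_const.div (continuousOn_id.cpow continuousOn_const fun z hz =>
        mem_slitPlane_of_re_nonneg hz.1 hz.2) fun z hz => ?_
      simpa [Complex.cpow_eq_zero_iff] using hz.2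
    have hinv : ContinuousOn (fun z : ℂ => z⁻¹) D := continuousOn_id.inv₀ fun z hz => hz.2
    refine hpow.smul ((continuousOn_integral_cexp_neg_mul_smul (by fun_prop)
      (fun s => by positivity) hφ).comp hinv fun z hz => ?_)
    simpa [Complex.inv_re] using div_nonneg hz.1 (Complex.normSq_nonneg z)
  refine Set.EqOn.of_subset_closure (s := {z : ℂ | 0 < z.re})
    (fun z hz => fourier_gaussian_smul_fourier_of_re_pos hφ hz ξ) hleft hright
    (fun z (hz : 0 < z.re) => ⟨hz.le, ?_⟩) ?_ ⟨hb, hb₀⟩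
  · rintro rfl
    simp at hz
  · rw [Complex.closure_setOfPred_lt_re]
    exact Set.sdiff_subset

lemma norm_fourier_chirp_smul_fourier (hφ : Integrable φ) (hφ' : Integrable (𝓕 φ)) {c : ℝ}
    (hc : c ≠ 0) (ξ : ℝ) :
    ‖𝓕 (fun t : ℝ => Complex.exp (Complex.I * π * c * t ^ 2) • 𝓕 φ t) ξ‖ =
      |c| ^ (-(1 / 2) : ℝ) *
        ‖𝓕 (fun s : ℝ => Complex.exp (-(Complex.I * π / c * s ^ 2)) • φ s) (ξ / c)‖ := by
  set b : ℂ := -Complex.I * c with hb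
  have hb_inv : b⁻¹ = Complex.I / c := by simp [hb, div_eq_mul_inv, mul_comm]
  have hfactor : ‖1 / b ^ (1 / 2 : ℂ)‖ = |c| ^ (-(1 / 2) : ℝ) := by
    have hnorm := Complex.norm_cpow_real b (1 / 2)
    rw [norm_div, norm_one, rpow_neg (abs_nonneg c), one_div]
    simpa [hb] using hnorm
  have hshift : ∫ s : ℝ, Complex.exp (-b⁻¹ * ↑(π * (s + ξ) ^ 2)) • φ s =
      Complex.exp (↑(-π / c * ξ ^ 2) * Complex.I) •
        𝓕 (fun s : ℝ => Complex.exp (-(Complex.I * π / c * s ^ 2)) • φ s) (ξ / c) := by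
    rw [fourier_real_eq_integral_exp_smul, ← integral_smul]
    refine integral_congr_ae (.of_forall fun s => ?_)
    simp only [smul_smul, ← Complex.exp_add, hb_inv]
    congr 2
    push_cast
    ring
  have hchirp : ∀ t : ℝ, Complex.I * π * c * t ^ 2 = -b * ↑(π * t ^ 2) := fun t => by
    rw [hb]
    push_cast
    ring
  simp only [hchirp]
  rw [fourier_gaussian_smul_fourier hφ hφ' (by simp [hb]) (by simp [hb, hc]), hshift, norm_smul,
    norm_smul, hfactor, Complex.norm_exp_ofReal_mul_I, one_mul]

end Chirp

section Lorentzian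

variable {a : ℂ} {c : ℝ}

lemma integrable_cexp_neg_mul_abs (ha : 0 < a.re) :
    Integrable fun s : ℝ => Complex.exp (-(a * |s|)) := by
  simpa using integrable_cexp_neg_quadratic_abs (b := 0) ha le_rfl

lemma integrable_fourier_cexp_neg_mul_abs (ha : 0 < a.re) :
    Integrable (𝓕 fun s : ℝ => Complex.exp (-(a * |s|))) := by
  simpa using integrable_fourier_cexp_neg_quadratic_abs (b := 0) ha le_rfl

/-- The chirp `e^{iπct²}` times the Lorentzian `2a / (a² + (2πt)²)`; the latter is normalised to
be the Fourier transform of `e^{-a|s|}`. -/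
noncomputable def chirpMulLorentzian (a : ℂ) (c t : ℝ) : ℂ :=
  Complex.exp (Complex.I * π * c * t ^ 2) * (2 * a / (a ^ 2 + (2 * π * t) ^ 2))

lemma chirpMulLorentzian_eq_smul_fourier (ha : 0 < a.re) (c : ℝ) :
    chirpMulLorentzian a c = fun t : ℝ =>
      Complex.exp (Complex.I * π * c * t ^ 2) • 𝓕 (fun s : ℝ => Complex.exp (-(a * |s|))) t := by
  simp only [funext_iff, fourier_cexp_neg_mul_abs ha, smul_eq_mul, chirpMulLorentzian,
    implies_true]

lemma cexp_I_mul_sq_div_one_add_sq (t : ℝ) :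
    Complex.exp (Complex.I * t ^ 2) / (1 + t ^ 2) =
      (π : ℂ) • chirpMulLorentzian (2 * π) π⁻¹ t := by
  have hπ : (π : ℂ) ≠ 0 := Complex.ofReal_ne_zero.mpr pi_ne_zero
  have hphase : Complex.I * π * ↑π⁻¹ * t ^ 2 = Complex.I * t ^ 2 := by
    push_cast
    field_simp
  have hdenom : (2 * π : ℂ) ^ 2 + (2 * π * t) ^ 2 = (2 * π) ^ 2 * (1 + t ^ 2) := by ring
  rw [chirpMulLorentzian, hphase, hdenom, smul_eq_mul]
  field_simp

lemma integrable_chirpMulLorentzian (ha : 0 < a.re) (c : ℝ) :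
    Integrable (chirpMulLorentzian a c) := by
  have hnorm : ∀ t : ℝ, ‖Complex.exp (Complex.I * π * c * t ^ 2)‖ ≤ 1 := fun t => by
    simp [Complex.norm_exp, ← Complex.ofReal_pow]
  rw [chirpMulLorentzian_eq_smul_fourier ha]
  exact (integrable_fourier_cexp_neg_mul_abs ha).bdd_smul 1 (by fun_prop) (.of_forall hnorm)

lemma norm_fourier_chirpMulLorentzian (ha : 0 < a.re) (hc : c ≠ 0) (ξ : ℝ) :
    ‖𝓕 (chirpMulLorentzian a c) ξ‖ = |c| ^ (-(1 / 2) : ℝ) *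
      ‖𝓕 (fun s : ℝ => Complex.exp (-(a * |s| + Complex.I * π / c * s ^ 2))) (ξ / c)‖ := by
  rw [chirpMulLorentzian_eq_smul_fourier ha, norm_fourier_chirp_smul_fourier
    (integrable_cexp_neg_mul_abs ha) (integrable_fourier_cexp_neg_mul_abs ha) hc]
  simp only [smul_eq_mul, ← Complex.exp_add, ← neg_add_rev]

lemma tendsto_sq_mul_norm_fourier_chirpMulLorentzian (ha : 0 < a.re) (hc : c ≠ 0) :
    Tendsto (fun ξ : ℝ => (2 * π * ξ) ^ 2 * ‖𝓕 (chirpMulLorentzian a c) ξ‖) (cocompact ℝ)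
      (𝓝 (|c| ^ (3 / 2 : ℝ) * ‖2 * a‖)) := by
  have hb : 0 ≤ (Complex.I * π / c).re := by simp
  have hdilate : Tendsto (fun ξ : ℝ => ξ / c) (cocompact ℝ) (cocompact ℝ) := by
    simpa only [div_eq_inv_mul] using tendsto_cocompact_mul_left₀ (inv_ne_zero hc)
  have hpow : |c| ^ (3 / 2 : ℝ) = c ^ 2 * |c| ^ (-(1 / 2) : ℝ) := by
    rw [← sq_abs, ← rpow_natCast, ← rpow_add (abs_pos.mpr hc)]
    norm_num
  refine ((((tendsto_sq_smul_fourier_cexp_neg_quadratic_abs ha hb).comp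
    hdilate).norm).const_mul (|c| ^ (3 / 2 : ℝ))).congr fun ξ => ?_
  rw [norm_fourier_chirpMulLorentzian ha hc, hpow, Function.comp_apply, norm_smul,
    norm_of_nonneg (sq_nonneg _)]
  field_simp

lemma tendsto_sq_mul_norm_fourier_pi_smul_chirpMulLorentzian :
    Tendsto (fun ξ : ℝ => π ^ (3 / 2 : ℝ) * ξ ^ 2 *
      ‖𝓕 (fun t => (π : ℂ) • chirpMulLorentzian (2 * π) π⁻¹ t) ξ‖) (cocompact ℝ) (𝓝 1) := by
  have hpow : (π⁻¹ : ℝ) ^ (3 / 2 : ℝ) = (π ^ (3 / 2 : ℝ))⁻¹ := inv_rpow pi_pos.le _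
  have hlim := (tendsto_sq_mul_norm_fourier_chirpMulLorentzian (a := 2 * π) (by simp [pi_pos])
    (inv_ne_zero pi_ne_zero)).const_mul (π ^ (3 / 2 : ℝ) / (4 * π))
  convert hlim using 2 with ξ
  · rw [fourier_const_smul, norm_smul, Complex.norm_real, norm_of_nonneg pi_pos.le]
    field_simp
    ring
  · rw [abs_of_pos (inv_pos.mpr pi_pos), hpow]
    simp only [norm_mul, Complex.norm_ofNat, Complex.norm_real, norm_of_nonneg pi_pos.le]
    field_simp
    norm_num

end Lorentzian

section SlowDecay

variable {α E : Type*} [NormedAddCommGroup E] {l : Filter α} [l.NeBot] {g : α → ℝ} {F : α → E}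
  {p L : ℝ}

lemma not_isBigO_rpow_neg_of_tendsto (hg : Tendsto g l atTop)
    (hF : Tendsto (fun x => g x ^ p * ‖F x‖) l (𝓝 L)) (hL : L ≠ 0) {r : ℝ} (hr : p < r) :
    ¬ F =O[l] fun x => g x ^ (-r) := by
  intro hO
  have hmul : (fun x => g x ^ p * ‖F x‖) =O[l] fun x => g x ^ (-(r - p)) := by
    refine ((isBigO_refl (fun x => g x ^ p) l).mul hO.norm_left).trans_eventuallyEq ?_
    filter_upwards [hg.eventually_gt_atTop 0] with x hx
    rw [← rpow_add hx, neg_sub, sub_eq_add_neg]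
  have hzero := hmul.trans_tendsto ((tendsto_rpow_neg_atTop (sub_pos.mpr hr)).comp hg)
  exact hL (tendsto_nhds_unique hF hzero)

lemma not_isBigO_exp_neg_of_tendsto (hg : Tendsto g l atTop)
    (hF : Tendsto (fun x => g x ^ p * ‖F x‖) l (𝓝 L)) (hL : L ≠ 0) {a : ℝ} (ha : 0 < a) :
    ¬ F =O[l] fun x => exp (-a * g x) := fun hO =>
  not_isBigO_rpow_neg_of_tendsto hg hF hL (lt_add_one p) <|
    hO.trans ((isLittleO_exp_neg_mul_rpow_atTop ha (-(p + 1))).isBigO.comp_tendsto hg)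

end SlowDecay

/-- For `f(t) = e^{it²}/(1+t²)`, `f` is integrable and
`π^{3/2} ξ² |𝓕[f](ξ)| → 1` as `|ξ| → ∞`.  In particular `𝓕[f]` decays slowly:
it is not `O(e^{-a|ξ|})` for any `a > 0`, nor `O(|ξ|^{-r})` for any `r > 2`. -/
theorem stmt_14 (f : ℝ → ℂ)
    (hf : ∀ t : ℝ, f t = Complex.exp (Complex.I * (t : ℂ) ^ 2) / (1 + (t : ℂ) ^ 2)) :
    Integrable f ∧
    Tendsto (fun ξ : ℝ => π ^ ((3 : ℝ) / 2) * ξ ^ 2 * ‖𝓕 f ξ‖)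
      (Filter.cocompact ℝ) (nhds 1) ∧
    (¬ ∃ a : ℝ, 0 < a ∧
      (fun ξ : ℝ => 𝓕 f ξ) =O[Filter.cocompact ℝ] fun ξ : ℝ => Real.exp (-a * |ξ|)) ∧
    (¬ ∃ r : ℝ, 2 < r ∧
      (fun ξ : ℝ => 𝓕 f ξ) =O[Filter.cocompact ℝ] fun ξ : ℝ => |ξ| ^ (-r)) := by
  have hf_eq : f = fun t => (π : ℂ) • chirpMulLorentzian (2 * π) π⁻¹ t :=
    funext fun t => (hf t).trans (cexp_I_mul_sq_div_one_add_sq t)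
  have hint : Integrable f :=
    hf_eq ▸ (integrable_chirpMulLorentzian (by simp [pi_pos]) π⁻¹).smul (π : ℂ)
  have hlim : Tendsto (fun ξ : ℝ => π ^ ((3 : ℝ) / 2) * ξ ^ 2 * ‖𝓕 f ξ‖) (cocompact ℝ) (𝓝 1) :=
    hf_eq ▸ tendsto_sq_mul_norm_fourier_pi_smul_chirpMulLorentzian
  have hπ : π ^ ((3 : ℝ) / 2) ≠ 0 := (rpow_pos_of_pos pi_pos _).ne'
  have habs : Tendsto (fun ξ : ℝ => |ξ|) (cocompact ℝ) atTop := tendsto_norm_cocompact_atTop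
  have hlim_abs : Tendsto (fun ξ : ℝ => |ξ| ^ (2 : ℝ) * ‖𝓕 f ξ‖) (cocompact ℝ)
      (𝓝 (π ^ ((3 : ℝ) / 2))⁻¹) := by
    simpa only [rpow_two, sq_abs, mul_assoc, inv_mul_cancel_left₀ hπ, mul_one] using
      hlim.const_mul (π ^ ((3 : ℝ) / 2))⁻¹
  exact ⟨hint, hlim,
    fun ⟨a, ha, hO⟩ => not_isBigO_exp_neg_of_tendsto habs hlim_abs (inv_ne_zero hπ) ha hO,
    fun ⟨r, hr, hO⟩ => not_isBigO_rpow_neg_of_tendsto habs hlim_abs (inv_ne_zero hπ) hr hO⟩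
end

section
/- For every s ∈ ℂ with 0 < Re s < 2, the function t ↦ t^{s−1}/(1+t²) is Lebesgue integrable on (0,∞) and 𝓜[t ↦ 1/(1+t²)](s) = π / (2·sin(πs/2)). -/
open MeasureTheory Real

/-!
The substitution `x = t / (1 + t)` turns Euler's Beta integral `B(u, v)` over `(0, 1)` into the
Mellin transform of `t ↦ (1 + t) ^ (-(u + v))` at `u`. For `v = 1 - u` the value is
`Γ(u) Γ(1 - u) = π / sin (π u)` by the reflection formula, and replacing `t` by `t ^ a` gives the
transform of `t ↦ 1 / (1 + t ^ a)` at `s = a u`.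
-/

section Substitution

variable {K : Type*} [Field K] [LinearOrder K] [IsStrictOrderedRing K]
  {E : Type*} [NormedAddCommGroup E] [NormedSpace ℝ E]

lemma image_div_one_add_Ioi_zero :
    (fun t : K => t / (1 + t)) '' Set.Ioi 0 = Set.Ioo 0 1 := by
  ext x
  constructor
  · rintro ⟨t, ht : 0 < t, rfl⟩
    exact ⟨by positivity, (div_lt_one (by positivity)).2 (by linarith)⟩
  · rintro ⟨hx_pos, hx_lt⟩
    have hx_compl : 0 < 1 - x := sub_pos.2 hx_lt
    refine ⟨x / (1 - x), div_pos hx_pos hx_compl, ?_⟩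
    field_simp
    ring

lemma monotoneOn_div_one_add_Ioi_neg_one :
    MonotoneOn (fun t : K => t / (1 + t)) (Set.Ioi (-1)) := by
  intro a (ha : -1 < a) b (hb : -1 < b) hab
  exact (div_le_div_iff₀ (by linarith) (by linarith)).2 (by linarith)

lemma hasDerivAt_div_one_add {𝕜 : Type*} [NontriviallyNormedField 𝕜] {t : 𝕜} (ht : 1 + t ≠ 0) :
    HasDerivAt (fun t : 𝕜 => t / (1 + t)) ((1 + t) ^ 2)⁻¹ t := by
  refine ((hasDerivAt_id t).div ((hasDerivAt_id t).const_add 1) ht).congr_deriv ?_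
  simp

lemma hasDerivWithinAt_div_one_add_Ioi_zero (t : ℝ) (ht : t ∈ Set.Ioi 0) :
    HasDerivWithinAt (fun t : ℝ => t / (1 + t)) ((1 + t) ^ 2)⁻¹ (Set.Ioi 0) t :=
  (hasDerivAt_div_one_add (add_pos one_pos ht).ne').hasDerivWithinAt

lemma integrableOn_Ioo_zero_one_iff_comp_div_one_add (g : ℝ → E) :
    IntegrableOn g (Set.Ioo 0 1) ↔
      IntegrableOn (fun t => ((1 + t) ^ 2)⁻¹ • g (t / (1 + t))) (Set.Ioi 0) := by
  rw [← image_div_one_add_Ioi_zero]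
  exact integrableOn_image_iff_integrableOn_deriv_smul_of_monotoneOn measurableSet_Ioi
    hasDerivWithinAt_div_one_add_Ioi_zero
    (monotoneOn_div_one_add_Ioi_neg_one.mono (Set.Ioi_subset_Ioi neg_one_lt_zero.le)) g

lemma integral_Ioo_zero_one_eq_comp_div_one_add (g : ℝ → E) :
    ∫ x in Set.Ioo 0 1, g x = ∫ t in Set.Ioi (0 : ℝ), ((1 + t) ^ 2)⁻¹ • g (t / (1 + t)) := by
  rw [← image_div_one_add_Ioi_zero]
  exact integral_image_eq_integral_deriv_smul_of_monotoneOn measurableSet_Ioi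
    hasDerivWithinAt_div_one_add_Ioi_zero
    (monotoneOn_div_one_add_Ioi_neg_one.mono (Set.Ioi_subset_Ioi neg_one_lt_zero.le)) g

end Substitution

lemma eqOn_betaIntegrand_comp_div_one_add (u v : ℂ) :
    Set.EqOn
      (fun t : ℝ => ((1 + t) ^ 2)⁻¹ • (((t / (1 + t) : ℝ) : ℂ) ^ (u - 1) *
        (1 - ((t / (1 + t) : ℝ) : ℂ)) ^ (v - 1)))
      (fun t : ℝ => (t : ℂ) ^ (u - 1) • (1 + (t : ℂ)) ^ (-(u + v))) (Set.Ioi 0) := by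
  intro t (ht : 0 < t)
  beta_reduce
  have one_add_pos : 0 < 1 + t := by positivity
  have one_add_ne_zero : 1 + (t : ℂ) ≠ 0 := by exact_mod_cast one_add_pos.ne'
  have one_sub_eq : 1 - ((t / (1 + t) : ℝ) : ℂ) = ((1 + t : ℝ) : ℂ)⁻¹ := by
    push_cast
    field_simp
    ring
  have collect_exponents : (1 + (t : ℂ)) ^ (-(u + v)) =
      ((1 + (t : ℂ)) ^ 2)⁻¹ * ((1 + (t : ℂ)) ^ (u - 1))⁻¹ * ((1 + (t : ℂ)) ^ (v - 1))⁻¹ := by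
    rw [show u + v = (2 : ℕ) + (u - 1) + (v - 1) by push_cast; ring, Complex.cpow_neg,
      Complex.cpow_add _ _ one_add_ne_zero, Complex.cpow_add _ _ one_add_ne_zero,
      Complex.cpow_natCast, mul_inv, mul_inv]
  rw [one_sub_eq, Complex.inv_cpow_ofReal_nonneg one_add_pos.le, Complex.ofReal_div,
    Complex.div_cpow_ofReal_nonneg ht.le one_add_pos.le, Complex.real_smul, smul_eq_mul]
  push_cast
  rw [collect_exponents]
  ring

theorem hasMellin_one_add_cpow_neg {u v : ℂ} (hu : 0 < u.re) (hv : 0 < v.re) :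
    HasMellin (fun t : ℝ => (1 + (t : ℂ)) ^ (-(u + v))) u (Complex.betaIntegral u v) := by
  constructor
  · have beta_convergent := Complex.betaIntegral_convergent hu hv
    rw [intervalIntegrable_iff_integrableOn_Ioo_of_le zero_le_one,
      integrableOn_Ioo_zero_one_iff_comp_div_one_add] at beta_convergent
    exact beta_convergent.congr_fun (eqOn_betaIntegrand_comp_div_one_add u v) measurableSet_Ioi
  · rw [Complex.betaIntegral, intervalIntegral.integral_of_le zero_le_one,
      integral_Ioc_eq_integral_Ioo, integral_Ioo_zero_one_eq_comp_div_one_add]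
    exact (setIntegral_congr_fun measurableSet_Ioi
      (eqOn_betaIntegrand_comp_div_one_add u v)).symm

lemma betaIntegral_one_sub {u : ℂ} (hu : 0 < u.re) (hu' : u.re < 1) :
    Complex.betaIntegral u (1 - u) = π / Complex.sin (π * u) := by
  have h := Complex.Gamma_mul_Gamma_eq_betaIntegral hu (t := 1 - u) (by simpa using hu')
  rwa [Complex.Gamma_mul_Gamma_one_sub, add_sub_cancel, Complex.Gamma_one, one_mul, eq_comm] at h

theorem hasMellin_one_div_one_add {s : ℂ} (hs : 0 < s.re) (hs' : s.re < 1) :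
    HasMellin (fun t : ℝ => 1 / (1 + (t : ℂ))) s (π / Complex.sin (π * s)) := by
  have h := hasMellin_one_add_cpow_neg hs (v := 1 - s) (by simpa using hs')
  simpa only [add_sub_cancel, Complex.cpow_neg_one, ← one_div, betaIntegral_one_sub hs hs'] using h

lemma hasMellin_comp_rpow {E : Type*} [NormedAddCommGroup E] [NormedSpace ℂ E] {f : ℝ → E}
    {s : ℂ} {a : ℝ} {m : E} (ha : a ≠ 0) (hf : HasMellin f (s / a) m) :
    HasMellin (fun t => f (t ^ a)) s (|a|⁻¹ • m) :=
  ⟨(MellinConvergent.comp_rpow ha).2 hf.1, by rw [mellin_comp_rpow, hf.2]⟩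

theorem hasMellin_one_div_one_add_rpow {s : ℂ} {a : ℝ} (hs : 0 < s.re / a) (hs' : s.re / a < 1) :
    HasMellin (fun t : ℝ => 1 / (1 + ((t ^ a : ℝ) : ℂ))) s
      (π / (|a| * Complex.sin (π * s / a))) := by
  have ha : a ≠ 0 := by
    rintro rfl
    simp at hs
  rw [← Complex.div_ofReal_re] at hs hs'
  convert hasMellin_comp_rpow ha (hasMellin_one_div_one_add hs hs') using 1
  rw [Complex.real_smul, Complex.ofReal_inv, mul_div_assoc (π : ℂ) s, div_mul_eq_div_div_swap,
    div_eq_inv_mul]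

/-- For `0 < Re s < 2`, the function `t ↦ t^{s-1}/(1+t²)` is integrable
on `(0, ∞)` and the Mellin transform of `t ↦ 1/(1+t²)` at `s` equals `π/(2 sin(πs/2))`. -/
theorem stmt_16 (s : ℂ) (h0 : 0 < s.re) (h2 : s.re < 2) :
    IntegrableOn (fun t : ℝ => (t : ℂ) ^ (s - 1) / (1 + (t : ℂ) ^ 2)) (Set.Ioi 0) ∧
    mellin (fun t : ℝ => 1 / (1 + (t : ℂ) ^ 2)) s =
      (π : ℂ) / (2 * Complex.sin ((π : ℂ) * s / 2)) := by
  have h := hasMellin_one_div_one_add_rpow (half_pos h0) ((div_lt_one two_pos).2 h2)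
  simpa only [HasMellin, MellinConvergent, smul_eq_mul, mul_one_div, Real.rpow_two,
    Complex.ofReal_pow, abs_two, Complex.ofReal_ofNat] using h
end

section
/- Let f : ℝ → ℂ be defined by f(t) = 1/(t − i)². Then f is Lebesgue integrable on ℝ, and its Fourier transform satisfies 𝓕[f](ξ) = 0 for all ξ ≥ 0 and 𝓕[f](ξ) = 4π²·ξ·e^{2πξ} for all ξ < 0. -/
open MeasureTheory FourierTransform Real

/-!
The Laplace transform of a monomial is `∫₀^∞ xᵏ e^{-ax} dx = k! / a^{k+1}` for `Re a > 0`. At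
`a + 2πit` with `a = -2πiw`, `Im w > 0`, it says that `t ↦ 1 / (t - w)^{k+1}` is, up to a constant,
the Fourier transform of the function equal to `xᵏ e^{2πiwx}` for `x > 0` and to `0` for `x ≤ 0`.
For `k ≥ 1` that function is continuous and `1 / (t - w)^{k+1}` is integrable, so Fourier inversion
applies and no contour integral is needed.
-/

section LaplaceTransform

open Set Filter

theorem integrableOn_pow_mul_cexp_neg_mul_Ioi (k : ℕ) {a : ℂ} (ha : 0 < a.re) :
    IntegrableOn (fun x : ℝ => (x : ℂ) ^ k * Complex.exp (-a * x)) (Ioi 0) := by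
  have real_integrable : IntegrableOn (fun x : ℝ => x ^ k * exp (-a.re * x)) (Ioi 0) := by
    simpa using integrableOn_rpow_mul_exp_neg_mul_rpow (s := k)
      (neg_one_lt_zero.trans_le k.cast_nonneg) one_pos ha
  refine real_integrable.mono' (by fun_prop) (ae_restrict_of_forall_mem measurableSet_Ioi ?_)
  intro x hx
  simp [Complex.norm_exp, abs_of_pos (mem_Ioi.1 hx)]

theorem tendsto_pow_mul_cexp_neg_mul_atTop_nhds_zero (k : ℕ) {a : ℂ} (ha : 0 < a.re) :
    Tendsto (fun x : ℝ => (x : ℂ) ^ k * Complex.exp (-a * x)) atTop (nhds 0) := by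
  rw [tendsto_zero_iff_norm_tendsto_zero]
  refine (tendsto_rpow_mul_exp_neg_mul_atTop_nhds_zero k a.re ha).congr' ?_
  filter_upwards [eventually_ge_atTop 0] with x hx
  simp [Complex.norm_exp, abs_of_nonneg hx]

theorem hasDerivAt_pow_succ_mul_cexp_neg_mul (k : ℕ) (a : ℂ) (x : ℝ) :
    HasDerivAt (fun x : ℝ => (x : ℂ) ^ (k + 1) * Complex.exp (-a * x))
      ((k + 1) * ((x : ℂ) ^ k * Complex.exp (-a * x)) -
        a * ((x : ℂ) ^ (k + 1) * Complex.exp (-a * x))) x := by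
  have hasDerivAt_coe : HasDerivAt (fun x : ℝ => (x : ℂ)) 1 x := Complex.ofRealCLM.hasDerivAt
  convert! (hasDerivAt_coe.pow (k + 1)).mul (hasDerivAt_coe.const_mul (-a)).cexp using 1
  push_cast
  simp only [Pi.pow_apply]
  ring

theorem integral_pow_mul_cexp_neg_mul_Ioi (k : ℕ) {a : ℂ} (ha : 0 < a.re) :
    ∫ x in Ioi (0 : ℝ), (x : ℂ) ^ k * Complex.exp (-a * x) = k.factorial / a ^ (k + 1) := by
  have a_ne_zero : a ≠ 0 := by
    rintro rfl
    simp at ha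
  induction k with
  | zero => simpa using integral_exp_mul_complex_Ioi (a := -a) (by simpa using ha) 0
  | succ k ih =>
    have integrable_pow (m : ℕ) := integrableOn_pow_mul_cexp_neg_mul_Ioi m ha
    have integral_deriv := integral_Ioi_of_hasDerivAt_of_tendsto'
      (fun x _ => hasDerivAt_pow_succ_mul_cexp_neg_mul k a x)
      (((integrable_pow k).const_mul _).sub ((integrable_pow (k + 1)).const_mul _))
      (tendsto_pow_mul_cexp_neg_mul_atTop_nhds_zero (k + 1) ha)
    rw [integral_sub ((integrable_pow k).const_mul _) ((integrable_pow (k + 1)).const_mul _),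
      integral_const_mul, integral_const_mul, ih] at integral_deriv
    have recursion : a * ∫ x in Ioi (0 : ℝ), (x : ℂ) ^ (k + 1) * Complex.exp (-a * x) =
        (k + 1) * (k.factorial / a ^ (k + 1)) :=
      (sub_eq_zero.1 (by simpa using integral_deriv)).symm
    rw [← mul_right_inj' a_ne_zero, recursion, Nat.factorial_succ]
    push_cast
    field_simp
    ring

end LaplaceTransform

section OneSidedPowExp

open Set

/-- The function equal to `xᵏ e^{-ax}` for `x > 0` and to `0` for `x ≤ 0`, whose Fourier transform
is a constant multiple of a negative power of an affine function. -/
noncomputable def oneSidedPowExp (k : ℕ) (a : ℂ) : ℝ → ℂ :=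
  (Ioi 0).indicator fun x => (x : ℂ) ^ k * Complex.exp (-a * x)

theorem oneSidedPowExp_of_pos (k : ℕ) (a : ℂ) {x : ℝ} (hx : 0 < x) :
    oneSidedPowExp k a x = (x : ℂ) ^ k * Complex.exp (-a * x) :=
  indicator_of_mem (mem_Ioi.2 hx) _

theorem oneSidedPowExp_of_nonpos (k : ℕ) (a : ℂ) {x : ℝ} (hx : x ≤ 0) :
    oneSidedPowExp k a x = 0 :=
  indicator_of_notMem (notMem_Ioi.2 hx) _

theorem continuous_oneSidedPowExp {k : ℕ} (hk : k ≠ 0) (a : ℂ) :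
    Continuous (oneSidedPowExp k a) := by
  have eq_max_pow : oneSidedPowExp k a =
      fun x : ℝ => ((max x 0 : ℝ) : ℂ) ^ k * Complex.exp (-a * x) := by
    ext x
    rcases lt_or_ge 0 x with hx | hx
    · rw [oneSidedPowExp_of_pos k a hx, max_eq_left hx.le]
    · simp [oneSidedPowExp_of_nonpos k a hx, max_eq_right hx, hk]
  rw [eq_max_pow]
  fun_prop

theorem integrable_oneSidedPowExp (k : ℕ) {a : ℂ} (ha : 0 < a.re) :
    Integrable (oneSidedPowExp k a) :=
  (integrable_indicator_iff measurableSet_Ioi).2 (integrableOn_pow_mul_cexp_neg_mul_Ioi k ha)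

theorem fourier_oneSidedPowExp (k : ℕ) {a : ℂ} (ha : 0 < a.re) (t : ℝ) :
    𝓕 (oneSidedPowExp k a) t = k.factorial / (a + 2 * π * Complex.I * t) ^ (k + 1) := by
  have integrand_eq : (fun x : ℝ => Complex.exp (↑(-2 * π * x * t) * Complex.I) •
      oneSidedPowExp k a x) = oneSidedPowExp k (a + 2 * π * Complex.I * t) := by
    ext x
    rcases lt_or_ge 0 x with hx | hx
    · rw [oneSidedPowExp_of_pos _ _ hx, oneSidedPowExp_of_pos _ _ hx, smul_eq_mul,
        mul_left_comm, ← Complex.exp_add]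
      push_cast
      ring_nf
    · rw [oneSidedPowExp_of_nonpos _ _ hx, oneSidedPowExp_of_nonpos _ _ hx, smul_zero]
  rw [fourier_real_eq_integral_exp_smul, integrand_eq, oneSidedPowExp,
    integral_indicator measurableSet_Ioi, integral_pow_mul_cexp_neg_mul_Ioi k (by simpa using ha)]

end OneSidedPowExp

section InverseLinearPower

theorem norm_one_div_sub_I_pow_le {n : ℕ} (hn : 2 ≤ n) (s : ℝ) :
    ‖1 / ((s : ℂ) - Complex.I) ^ n‖ ≤ (1 + s ^ 2)⁻¹ := by
  have norm_sq : ‖(s : ℂ) - Complex.I‖ ^ 2 = 1 + s ^ 2 := by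
    simp [Complex.sq_norm, Complex.normSq_apply, ← sq, add_comm]
  have one_le_norm : 1 ≤ ‖(s : ℂ) - Complex.I‖ :=
    (one_le_sq_iff₀ (norm_nonneg _)).1 (by rw [norm_sq]; nlinarith)
  rw [norm_div, norm_one, norm_pow, one_div, ← norm_sq]
  gcongr

theorem integrable_one_div_sub_pow {w : ℂ} (hw : w.im ≠ 0) {n : ℕ} (hn : 2 ≤ n) :
    Integrable fun t : ℝ => 1 / ((t : ℂ) - w) ^ n := by
  have integrable_normalized : Integrable fun s : ℝ => 1 / ((s : ℂ) - Complex.I) ^ n :=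
    integrable_inv_one_add_sq.mono' (by measurability) (.of_forall (norm_one_div_sub_I_pow_le hn))
  have sub_eq (t : ℝ) : (t : ℂ) - w = w.im * (((t - w.re) / w.im : ℝ) - Complex.I) := by
    apply Complex.ext
    · simp [mul_div_cancel₀ _ hw]
    · simp
  refine (((integrable_normalized.comp_div hw).comp_sub_right w.re).const_mul
    (1 / (w.im : ℂ) ^ n)).congr (.of_forall fun t => ?_)
  simp only [sub_eq t, mul_pow, one_div, mul_inv]

theorem fourier_one_div_sub_pow_succ {w : ℂ} (hw : 0 < w.im) {k : ℕ} (hk : k ≠ 0) (ξ : ℝ) :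
    𝓕 (fun t : ℝ => 1 / ((t : ℂ) - w) ^ (k + 1)) ξ =
      (2 * π * Complex.I) ^ (k + 1) / k.factorial *
        oneSidedPowExp k (-(2 * π * Complex.I * w)) (-ξ) := by
  set a : ℂ := -(2 * π * Complex.I * w) with ha
  set c : ℂ := (2 * π * Complex.I) ^ (k + 1) / k.factorial with hc
  have re_pos : 0 < a.re := by simpa [ha] using mul_pos two_pi_pos hw
  have c_ne_zero : c ≠ 0 := by simp [hc, k.factorial_ne_zero]
  have eq_smul_fourier : (fun t : ℝ => 1 / ((t : ℂ) - w) ^ (k + 1)) =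
      c • 𝓕 (oneSidedPowExp k a) := by
    ext t
    rw [Pi.smul_apply, fourier_oneSidedPowExp k re_pos, smul_eq_mul,
      show a + 2 * π * Complex.I * t = 2 * π * Complex.I * (t - w) by rw [ha]; ring, mul_pow, hc]
    have := Complex.two_pi_I_ne_zero
    have : (k.factorial : ℂ) ≠ 0 := mod_cast k.factorial_ne_zero
    field_simp
  have integrable_fourier : Integrable (𝓕 (oneSidedPowExp k a)) := by
    rw [← integrable_smul_iff c_ne_zero, ← eq_smul_fourier]
    exact integrable_one_div_sub_pow hw.ne' (by lia)
  calc 𝓕 (fun t : ℝ => 1 / ((t : ℂ) - w) ^ (k + 1)) ξ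
      = c * 𝓕 (𝓕 (oneSidedPowExp k a)) ξ := by
        rw [eq_smul_fourier]
        exact congrFun (VectorFourier.fourierIntegral_const_smul _ _ _ _ c) ξ
    _ = c * 𝓕⁻ (𝓕 (oneSidedPowExp k a)) (-ξ) := by rw [fourierInv_eq_fourier_neg, neg_neg]
    _ = c * oneSidedPowExp k a (-ξ) := by
        rw [(continuous_oneSidedPowExp hk a).fourierInv_fourier_eq
          (integrable_oneSidedPowExp k re_pos) integrable_fourier]

end InverseLinearPower

theorem stmt_17_general {w : ℂ} (hw : 0 < w.im) {k : ℕ} (hk : k ≠ 0) (f : ℝ → ℂ)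
    (hf : ∀ t : ℝ, f t = 1 / ((t : ℂ) - w) ^ (k + 1)) :
    Integrable f ∧
    (∀ ξ : ℝ, 0 ≤ ξ → 𝓕 f ξ = 0) ∧
    (∀ ξ : ℝ, ξ < 0 → 𝓕 f ξ = (2 * π * Complex.I) ^ (k + 1) / k.factorial *
      (-ξ : ℂ) ^ k * Complex.exp (-(2 * π * Complex.I * w * ξ))) := by
  obtain rfl : f = fun t : ℝ => 1 / ((t : ℂ) - w) ^ (k + 1) := funext hf
  refine ⟨integrable_one_div_sub_pow hw.ne' (by lia), fun ξ hξ => ?_, fun ξ hξ => ?_⟩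
  · rw [fourier_one_div_sub_pow_succ hw hk, oneSidedPowExp_of_nonpos _ _ (neg_nonpos.2 hξ),
      mul_zero]
  · rw [fourier_one_div_sub_pow_succ hw hk, oneSidedPowExp_of_pos _ _ (neg_pos.2 hξ), ← mul_assoc]
    simp

/-- For `f(t) = 1/(t - i)²`, `f` is integrable on `ℝ`, `𝓕[f](ξ) = 0` for
all `ξ ≥ 0`, and `𝓕[f](ξ) = 4π² ξ e^{2πξ}` for all `ξ < 0`. -/
theorem stmt_17 (f : ℝ → ℂ)
    (hf : ∀ t : ℝ, f t = 1 / ((t : ℂ) - Complex.I) ^ 2) :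
    Integrable f ∧
    (∀ ξ : ℝ, 0 ≤ ξ → 𝓕 f ξ = 0) ∧
    (∀ ξ : ℝ, ξ < 0 → 𝓕 f ξ = ((4 * π ^ 2 * ξ * Real.exp (2 * π * ξ) : ℝ) : ℂ)) := by
  obtain ⟨integrable_f, fourier_nonneg, fourier_neg⟩ :=
    stmt_17_general (w := Complex.I) (by simp) one_ne_zero f hf
  refine ⟨integrable_f, fourier_nonneg, fun ξ hξ => ?_⟩
  have exponent_eq : -(2 * π * Complex.I * Complex.I * ξ) = 2 * π * ξ := by
    linear_combination -(2 * π * ξ : ℂ) * Complex.I_mul_I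
  rw [fourier_neg ξ hξ, exponent_eq, mul_pow, Complex.I_sq]
  push_cast [Nat.factorial_one]
  ring
end

section
/- For every y ∈ ℝ, the series ∑_{n=1}^∞ 1/((y−n)² + 1/n²) converges; let f : ℝ → ℝ denote its sum. Then for every integer n ≥ 1 one has f(n) ≥ n², while for every integer n ≥ 1 one has f(n + 1/2) ≤ 8 + π²/3. In particular, f takes values ≥ c infinitely often and values ≤ 8 + π²/3 infinitely often for every c > 0, so f is unbounded but does not tend to +∞. -/
open Filter Real

/-!
The summand with index `n` is a spike of height `n²` centred at `n`. At `y = n` that spike alone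
gives `f(n) ≥ n²`. Away from the integers the spikes are dominated by `1 / (y - k)²`, and summing
these over all `k ∈ ℤ` gives a function of period `1`: its value at half-integers does not depend on
the half-integer, and comparing the sum on either side of `y` with `ζ(2)` bounds it by `8 + π²/3`.
-/

lemma summable_one_div_sub_intCast_sq (y : ℝ) : Summable fun k : ℤ => 1 / (y - k) ^ 2 := by
  have h := (summable_one_div_int_add_rpow (-y) 2).2 one_lt_two
  simpa only [rpow_two, sq_abs, ← sub_eq_add_neg, sub_sq_comm _ y] using h

section Spikes

variable {ι : Type*} {m : ι → ℤ} {ε : ι → ℝ} {y : ℝ}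

/-- The `i`-th summand of the series `∑ 1 / ((y - mᵢ)² + εᵢ)`: as a function of `y`, a spike of
height `1 / εᵢ` centred at the integer `mᵢ`. -/
noncomputable def spike (m : ι → ℤ) (ε : ι → ℝ) (y : ℝ) (i : ι) : ℝ :=
  1 / ((y - m i) ^ 2 + ε i)

lemma spike_nonneg (hε : ∀ i, 0 ≤ ε i) (y : ℝ) (i : ι) : 0 ≤ spike m ε y i :=
  one_div_nonneg.2 (add_nonneg (sq_nonneg _) (hε i))

lemma spike_le_one_div_sq {i : ι} (hε : 0 ≤ ε i) (hy : y ≠ m i) :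
    spike m ε y i ≤ 1 / (y - m i) ^ 2 :=
  one_div_le_one_div_of_le (sq_pos_of_ne_zero (sub_ne_zero.2 hy)) (le_add_of_nonneg_right hε)

lemma summable_spike (hm : m.Injective) (hε : ∀ i, 0 ≤ ε i) (y : ℝ) :
    Summable (spike m ε y) := by
  have hbound : Summable fun i => 1 / (y - m i) ^ 2 :=
    (summable_one_div_sub_intCast_sq y).comp_injective hm
  have hne : ∀ᶠ i in cofinite, (m i : ℝ) ≠ y :=
    (Int.cast_injective.comp hm).tendsto_cofinite.eventually (eventually_cofinite_ne y)
  refine hbound.of_norm_bounded_eventually (hne.mono fun i hi => ?_)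
  rw [norm_of_nonneg (spike_nonneg hε y i)]
  exact spike_le_one_div_sq (hε i) hi.symm

lemma one_div_le_tsum_spike (hm : m.Injective) (hε : ∀ i, 0 ≤ ε i) (i : ι) :
    1 / ε i ≤ ∑' j, spike m ε (m i) j := by
  have hpeak : spike m ε (m i) i = 1 / ε i := by simp [spike]
  exact hpeak ▸ (summable_spike hm hε _).le_tsum i fun j _ => spike_nonneg hε _ j

lemma tsum_spike_le_tsum_int (hm : m.Injective) (hε : ∀ i, 0 ≤ ε i) (hy : ∀ i, y ≠ m i) :
    ∑' i, spike m ε y i ≤ ∑' k : ℤ, 1 / (y - k) ^ 2 :=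
  (summable_spike hm hε y).tsum_le_tsum_of_inj m hm (fun _ _ => by positivity)
    (fun i => spike_le_one_div_sq (hε i) (hy i)) (summable_one_div_sub_intCast_sq y)

end Spikes

lemma summable_one_div_natCast_add_sq (x : ℝ) : Summable fun n : ℕ => 1 / (n + x) ^ 2 := by
  simpa only [rpow_two, sq_abs] using (summable_one_div_nat_add_rpow x 2).2 one_lt_two

lemma tsum_one_div_natCast_add_sq_le {x : ℝ} (hx : 0 ≤ x) :
    ∑' n : ℕ, 1 / (n + x) ^ 2 ≤ 1 / x ^ 2 + π ^ 2 / 6 := by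
  have hζ : HasSum (fun n : ℕ => 1 / ((n + 1 : ℕ) : ℝ) ^ 2) (π ^ 2 / 6) := by
    simpa using (hasSum_nat_add_iff' 1).2 hasSum_zeta_two
  have hsum := summable_one_div_natCast_add_sq x
  rw [hsum.tsum_eq_zero_add, Nat.cast_zero, zero_add, ← hζ.tsum_eq]
  gcongr with n
  · exact (summable_nat_add_iff 1).2 hsum
  · exact hζ.summable
  · exact le_add_of_nonneg_right hx

lemma tsum_one_div_intCast_add_sq (x : ℝ) :
    ∑' k : ℤ, 1 / (k + x) ^ 2 =
      ∑' n : ℕ, 1 / (n + x) ^ 2 + ∑' n : ℕ, 1 / (n + (1 - x)) ^ 2 := by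
  have hneg (n : ℕ) : 1 / (((-(n + 1) : ℤ) : ℝ) + x) ^ 2 = 1 / (n + (1 - x)) ^ 2 := by
    push_cast
    ring
  rw [tsum_of_nat_of_neg_add_one]
  · simp only [hneg, Int.cast_natCast]
  · exact summable_one_div_natCast_add_sq x
  · simpa only [hneg] using summable_one_div_natCast_add_sq (1 - x)

lemma tsum_one_div_intCast_add_sub_sq_le (n : ℤ) {x : ℝ} (hx₀ : 0 ≤ x) (hx₁ : x ≤ 1) :
    ∑' k : ℤ, 1 / (n + x - k) ^ 2 ≤ 1 / x ^ 2 + 1 / (1 - x) ^ 2 + π ^ 2 / 3 :=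
  calc ∑' k : ℤ, 1 / (n + x - k) ^ 2
      = ∑' k : ℤ, 1 / (k + x) ^ 2 := by
        rw [← (Equiv.subLeft n).tsum_eq fun k : ℤ => 1 / (k + x) ^ 2]
        simp only [Equiv.subLeft_apply, Int.cast_sub, sub_add_eq_add_sub]
    _ = ∑' j : ℕ, 1 / (j + x) ^ 2 + ∑' j : ℕ, 1 / (j + (1 - x)) ^ 2 :=
        tsum_one_div_intCast_add_sq x
    _ ≤ (1 / x ^ 2 + π ^ 2 / 6) + (1 / (1 - x) ^ 2 + π ^ 2 / 6) :=
        add_le_add (tsum_one_div_natCast_add_sq_le hx₀)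
          (tsum_one_div_natCast_add_sq_le (sub_nonneg.2 hx₁))
    _ = 1 / x ^ 2 + 1 / (1 - x) ^ 2 + π ^ 2 / 3 := by ring

lemma intCast_add_half_ne_intCast (n k : ℤ) : (n : ℝ) + 1 / 2 ≠ k := by
  intro h
  have : (2 * n + 1 : ℤ) = 2 * k := by exact_mod_cast (by linarith : (2 * n + 1 : ℝ) = 2 * k)
  omega

lemma not_bddAbove_range_of_sq_le {f : ℝ → ℝ} (h : ∀ n : ℕ, 1 ≤ n → (n : ℝ) ^ 2 ≤ f n) :
    ¬ BddAbove (Set.range f) := by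
  have hsq : Tendsto (fun n : ℕ => (n : ℝ) ^ 2) atTop atTop :=
    (tendsto_pow_atTop two_ne_zero).comp tendsto_natCast_atTop_atTop
  have hf : Tendsto (fun n : ℕ => f n) atTop atTop :=
    tendsto_atTop_mono' _ ((eventually_ge_atTop 1).mono h) hsq
  exact fun hb => not_bddAbove_of_tendsto_atTop hf (hb.mono (Set.range_comp_subset_range _ f))

lemma not_tendsto_atTop_of_natCast_add_le {f : ℝ → ℝ} {x C : ℝ}
    (h : ∀ n : ℕ, f (n + x) ≤ C) : ¬ Tendsto f atTop atTop := by
  intro hf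
  have hx : Tendsto (fun n : ℕ => (n : ℝ) + x) atTop atTop :=
    tendsto_atTop_add_const_right _ x tendsto_natCast_atTop_atTop
  exact not_bddAbove_of_tendsto_atTop (hf.comp hx) ⟨C, Set.forall_mem_range.2 h⟩

/-- The series `∑_{n≥1} 1/((y-n)² + 1/n²)` converges for every `y ∈ ℝ`;
its sum `f` satisfies `f(n) ≥ n²` and `f(n + 1/2) ≤ 8 + π²/3` for every integer `n ≥ 1`.
In particular `f` is unbounded but does not tend to `+∞`. -/
theorem stmt_18 :
    (∀ y : ℝ, Summable (fun n : ℕ =>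
      1 / ((y - ((n : ℝ) + 1)) ^ 2 + 1 / ((n : ℝ) + 1) ^ 2))) ∧
    ∀ f : ℝ → ℝ,
      (∀ y : ℝ, f y = ∑' n : ℕ, 1 / ((y - ((n : ℝ) + 1)) ^ 2 + 1 / ((n : ℝ) + 1) ^ 2)) →
      (∀ n : ℕ, 1 ≤ n → (n : ℝ) ^ 2 ≤ f n) ∧
      (∀ n : ℕ, 1 ≤ n → f ((n : ℝ) + 1 / 2) ≤ 8 + π ^ 2 / 3) ∧
      ¬ BddAbove (Set.range f) ∧
      ¬ Tendsto f atTop atTop := by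
  let m : ℕ → ℤ := fun n => n + 1
  let ε : ℕ → ℝ := fun n => 1 / ((n : ℝ) + 1) ^ 2
  have hm : m.Injective := fun i j hij => by simpa [m] using hij
  have hε (n : ℕ) : 0 ≤ ε n := by positivity
  have hspike (y : ℝ) (n : ℕ) :
      1 / ((y - ((n : ℝ) + 1)) ^ 2 + 1 / ((n : ℝ) + 1) ^ 2) = spike m ε y n := by
    simp [spike, m, ε]
  simp only [hspike]
  refine ⟨summable_spike hm hε, fun f hf => ?_⟩
  have hlower (n : ℕ) (hn : 1 ≤ n) : (n : ℝ) ^ 2 ≤ f n := by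
    obtain ⟨k, rfl⟩ := Nat.exists_eq_add_of_le' hn
    simpa [hf, m, ε] using one_div_le_tsum_spike hm hε k
  have hupper (n : ℕ) : f ((n : ℝ) + 1 / 2) ≤ 8 + π ^ 2 / 3 :=
    calc f (n + 1 / 2)
        ≤ ∑' k : ℤ, 1 / ((n : ℝ) + 1 / 2 - k) ^ 2 := hf _ ▸
          tsum_spike_le_tsum_int hm hε fun i => intCast_add_half_ne_intCast n (m i)
      _ ≤ 1 / (1 / 2) ^ 2 + 1 / (1 - 1 / 2) ^ 2 + π ^ 2 / 3 :=
          tsum_one_div_intCast_add_sub_sq_le n (by norm_num) (by norm_num)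
      _ = 8 + π ^ 2 / 3 := by norm_num
  exact ⟨hlower, fun n _ => hupper n, not_bddAbove_range_of_sq_le hlower,
    not_tendsto_atTop_of_natCast_add_le hupper⟩
end

section
/- Let n ≥ 2 be a natural number and define f : ℝ → ℂ by f(t) = e^{i t^n}/(1 + t²). Then f is Lebesgue integrable on ℝ and differentiable on ℝ, but its derivative f' is not Lebesgue integrable on ℝ. -/
open MeasureTheory

/-!
Write `f = a e^{iφ}` with amplitude `a(t) = 1 / (1 + t²)` and phase `φ(t) = tⁿ`. The phase factor
has modulus `1`, so `f` is integrable because `a` is. Differentiating, `f' = e^{iφ} (a' + i a φ')`,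
and since `a'` and `a φ'` are real, `|f'| ≥ |a φ'|`. Here `a φ' = n tⁿ⁻¹ / (1 + t²)`, which for
`n ≥ 2` dominates a multiple of `1 / t` at infinity.
-/

/-- The complex oscillation `a e^{iφ}` with real amplitude `a` and real phase `φ`. The amplitude may
vanish or be negative, so it is the modulus only up to sign. -/
noncomputable def phasor {α : Type*} (a φ : α → ℝ) (x : α) : ℂ :=
  a x * Complex.exp (Complex.I * φ x)

section Phasor

theorem norm_phasor {α : Type*} (a φ : α → ℝ) (x : α) : ‖phasor a φ x‖ = |a x| := by
  rw [phasor, norm_mul, Complex.norm_exp_I_mul_ofReal, mul_one, Complex.norm_real,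
    Real.norm_eq_abs]

theorem integrable_phasor {α : Type*} [MeasurableSpace α] {μ : Measure α} {a φ : α → ℝ}
    (ha : Integrable a μ) (hφ : AEStronglyMeasurable φ μ) : Integrable (phasor a φ) μ := by
  have phase_meas : AEStronglyMeasurable (fun x ↦ Complex.exp (Complex.I * φ x)) μ :=
    (by fun_prop : Continuous fun y : ℝ ↦ Complex.exp (Complex.I * y)).comp_aestronglyMeasurable hφ
  exact ha.mono (ha.ofReal.aestronglyMeasurable.mul phase_meas)
    (.of_forall fun x ↦ (norm_phasor a φ x).le)

variable {a φ : ℝ → ℝ} {t : ℝ}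

theorem hasDerivAt_phasor {a' φ' : ℝ} (ha : HasDerivAt a a' t) (hφ : HasDerivAt φ φ' t) :
    HasDerivAt (phasor a φ)
      (Complex.exp (Complex.I * φ t) * (a' + (a t * φ' : ℝ) * Complex.I)) t := by
  refine (ha.ofReal_comp.mul (hφ.ofReal_comp.const_mul Complex.I).cexp).congr_deriv ?_
  push_cast
  ring

theorem abs_mul_deriv_le_norm_deriv_phasor (ha : DifferentiableAt ℝ a t)
    (hφ : DifferentiableAt ℝ φ t) : |a t * deriv φ t| ≤ ‖deriv (phasor a φ) t‖ := by
  rw [(hasDerivAt_phasor ha.hasDerivAt hφ.hasDerivAt).deriv, norm_mul,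
    Complex.norm_exp_I_mul_ofReal, one_mul]
  simpa using Complex.abs_im_le_norm (deriv a t + (a t * deriv φ t : ℝ) * Complex.I)

theorem integrable_mul_deriv_of_integrable_deriv_phasor {μ : Measure ℝ}
    (ha : Differentiable ℝ a) (hφ : Differentiable ℝ φ)
    (h : Integrable (deriv (phasor a φ)) μ) : Integrable (fun t ↦ a t * deriv φ t) μ :=
  h.mono (ha.continuous.measurable.mul (measurable_deriv φ)).aestronglyMeasurable
    (.of_forall fun t ↦ abs_mul_deriv_le_norm_deriv_phasor (ha t) (hφ t))

end Phasor

theorem inv_le_two_mul_pow_div_one_add_sq {m : ℕ} (hm : m ≠ 0) {t : ℝ} (ht : 1 ≤ t) :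
    t⁻¹ ≤ 2 * (t ^ m / (1 + t ^ 2)) := by
  have t_pos : 0 < t := by linarith
  calc
    t⁻¹ ≤ 2 * (t / (1 + t ^ 2)) := by
      rw [← mul_div_assoc, inv_eq_one_div, div_le_div_iff₀ t_pos (by positivity)]
      nlinarith
    _ ≤ 2 * (t ^ m / (1 + t ^ 2)) := by
      gcongr
      exact le_self_pow₀ ht hm

theorem not_integrable_pow_div_one_add_sq {m : ℕ} (hm : m ≠ 0) :
    ¬ Integrable fun t : ℝ ↦ t ^ m / (1 + t ^ 2) := by
  intro h
  refine not_integrableOn_Ioi_inv (a := 1) ?_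
  refine (h.const_mul 2).integrableOn.mono' measurable_inv.aestronglyMeasurable ?_
  filter_upwards [ae_restrict_mem measurableSet_Ioi] with t ht
  have one_lt : 1 < t := ht
  rw [Real.norm_of_nonneg (by positivity)]
  exact inv_le_two_mul_pow_div_one_add_sq hm one_lt.le

theorem differentiable_inv_one_add_sq : Differentiable ℝ fun t : ℝ ↦ (1 + t ^ 2)⁻¹ :=
  Differentiable.inv (by fun_prop) fun t ↦ by positivity

theorem not_integrable_deriv_phasor_inv_one_add_sq_pow {n : ℕ} (hn : 2 ≤ n) :
    ¬ Integrable (deriv (phasor (fun t : ℝ ↦ (1 + t ^ 2)⁻¹) fun t ↦ t ^ n)) := by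
  intro h
  have scaled_integrable : Integrable fun t : ℝ ↦ (n : ℝ) * (t ^ (n - 1) / (1 + t ^ 2)) := by
    refine (integrable_mul_deriv_of_integrable_deriv_phasor differentiable_inv_one_add_sq
      (differentiable_pow n) h).congr (.of_forall fun t ↦ ?_)
    simp only [deriv_pow_field]
    ring
  have n_unit : IsUnit (n : ℝ) := IsUnit.mk0 _ (by positivity)
  exact not_integrable_pow_div_one_add_sq (by lia)
    ((integrable_const_mul_iff n_unit _).1 scaled_integrable)

/-- For `n ≥ 2` and `f(t) = e^{it^n}/(1+t²)`, `f` is Lebesgue integrable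
on `ℝ` and differentiable on `ℝ`, but its derivative is not Lebesgue integrable on `ℝ`. -/
theorem stmt_19 (n : ℕ) (hn : 2 ≤ n) (f : ℝ → ℂ)
    (hf : ∀ t : ℝ, f t = Complex.exp (Complex.I * (t : ℂ) ^ n) / (1 + (t : ℂ) ^ 2)) :
    Integrable f ∧ (∀ t : ℝ, DifferentiableAt ℝ f t) ∧ ¬ Integrable (deriv f) := by
  obtain rfl : f = phasor (fun t : ℝ ↦ (1 + t ^ 2)⁻¹) fun t ↦ t ^ n := by
    funext t
    rw [hf, phasor]
    push_cast
    ring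
  refine ⟨?_, fun t ↦ ?_, not_integrable_deriv_phasor_inv_one_add_sq_pow hn⟩
  · exact integrable_phasor integrable_inv_one_add_sq (continuous_pow n).aestronglyMeasurable
  · exact (hasDerivAt_phasor (differentiable_inv_one_add_sq t).hasDerivAt
      (hasDerivAt_pow n t)).differentiableAt
end
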